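/- Define g_{1,4}(τ) = g_{(2/4,0)}(4τ)⁸ · g_{(1/4,0)}(4τ)⁻⁸ for τ ∈ ℍ. Then the ring O_{1,4}(ℚ) of weakly holomorphic modular functions for Γ₁(4) with rational Fourier coefficients equals ℚ[g_{1,4}, g_{1,4}⁻¹, (g_{1,4} − 16)⁻¹]; that is, g_{1,4}, its reciprocal, and (g_{1,4}−16)⁻¹ lie in O_{1,4}(ℚ), and every element of O_{1,4}(ℚ) is a polynomial in these three functions with rational coefficients. -/

import Mathlib

open Complex UpperHalfPlane Matrix MatrixGroups CongruenceSubgroup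
open scoped UpperHalfPlane Manifold Real

noncomputable section

/-- `N·τ` as a point of the upper half-plane (junk value `τ` if `N = 0`). -/
def hsmul (N : ℕ) (τ : UpperHalfPlane) : UpperHalfPlane :=
  if hN : 0 < N then
    ⟨(N : ℂ) * τ, by
      have h0 : (0 : ℝ) < (N : ℝ) := by exact_mod_cast hN
      simpa [Complex.mul_im] using mul_pos h0 τ.2⟩
  else τ

/-- The Siegel function `g_r(τ)` given by its infinite product expansion. -/
def siegel (r : ℚ × ℚ) (τ : ℍ) : ℂ :=
  -Complex.exp ((Real.pi : ℂ) * Complex.I * (((r.1 : ℂ) ^ 2 - (r.1 : ℂ) + 1 / 6) * τ)) *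
    Complex.exp ((Real.pi : ℂ) * Complex.I * (r.2 : ℂ) * ((r.1 : ℂ) - 1)) *
    (1 - Complex.exp (2 * (Real.pi : ℂ) * Complex.I * ((r.1 : ℂ) * τ + (r.2 : ℂ)))) *
    ∏' n : ℕ,
      ((1 - Complex.exp (2 * (Real.pi : ℂ) * Complex.I *
          (((n : ℂ) + 1 + (r.1 : ℂ)) * τ + (r.2 : ℂ)))) *
       (1 - Complex.exp (2 * (Real.pi : ℂ) * Complex.I *
          (((n : ℂ) + 1 - (r.1 : ℂ)) * τ - (r.2 : ℂ)))))

/-- The lattice point `ω = m·τ + n` attached to a pair `(m,n) ∈ ℤ²`. -/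
def lat (τ : ℍ) (p : ℤ × ℤ) : ℂ := (p.1 : ℂ) * τ + (p.2 : ℂ)

/-- `g₂(τ) = 60 ∑_{ω ∈ L_τ ∖ {0}} ω⁻⁴`. -/
def g2C (τ : ℍ) : ℂ := 60 * ∑' p : {p : ℤ × ℤ // p ≠ 0}, ((lat τ p.1) ^ 4)⁻¹

/-- `g₃(τ) = 140 ∑_{ω ∈ L_τ ∖ {0}} ω⁻⁶`. -/
def g3C (τ : ℍ) : ℂ := 140 * ∑' p : {p : ℤ × ℤ // p ≠ 0}, ((lat τ p.1) ^ 6)⁻¹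

/-- The discriminant `Δ(τ) = g₂(τ)³ - 27 g₃(τ)²`. -/
def discC (τ : ℍ) : ℂ := g2C τ ^ 3 - 27 * g3C τ ^ 2

/-- The Weierstrass `℘`-function relative to the lattice `L_τ = ℤτ + ℤ`. -/
def wpC (z : ℂ) (τ : ℍ) : ℂ :=
  (z ^ 2)⁻¹ + ∑' p : {p : ℤ × ℤ // p ≠ 0}, (((z - lat τ p.1) ^ 2)⁻¹ - ((lat τ p.1) ^ 2)⁻¹)

/-- The Fricke function `f_r(τ)`. -/
def fricke (r : ℚ × ℚ) (τ : ℍ) : ℂ :=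
  -(2 ^ 7 * 3 ^ 5) * (g2C τ * g3C τ / discC τ) * wpC ((r.1 : ℂ) * τ + (r.2 : ℂ)) τ

/-- The elliptic modular `j`-invariant. -/
def jinv (τ : ℍ) : ℂ := 1728 * g2C τ ^ 3 / discC τ

/-- The Dedekind eta function. -/
def etaC (τ : ℍ) : ℂ :=
  (Real.sqrt (2 * Real.pi) : ℂ) * Complex.exp (2 * (Real.pi : ℂ) * Complex.I / 16) *
    Complex.exp (2 * (Real.pi : ℂ) * Complex.I * τ / 24) *
    ∏' n : ℕ, (1 - Complex.exp (2 * (Real.pi : ℂ) * Complex.I * ((n : ℂ) + 1) * τ))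

/-- `r ∈ ℚ² ∖ ℤ²`. -/
def NonIntegral (r : ℚ × ℚ) : Prop := ¬ ∃ a b : ℤ, r = ((a : ℚ), (b : ℚ))

/-- `r ∈ (1/N)ℤ²`. -/
def InDen (N : ℕ) (r : ℚ × ℚ) : Prop := ∃ a b : ℤ, r = ((a : ℚ) / N, (b : ℚ) / N)

/-- Membership in `Γ^1(N)`: `a ≡ d ≡ 1` and `b ≡ 0 (mod N)`. -/
def GammaUpper (N : ℕ) (γ : SL(2, ℤ)) : Prop :=
  ((γ 0 0 : ℤ) : ZMod N) = 1 ∧ ((γ 1 1 : ℤ) : ZMod N) = 1 ∧ ((γ 0 1 : ℤ) : ZMod N) = 0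

/-- The transpose action `ᵗγ r = (a r₁ + c r₂, b r₁ + d r₂)` of `γ = [[a,b],[c,d]]`. -/
def tAct (γ : SL(2, ℤ)) (r : ℚ × ℚ) : ℚ × ℚ :=
  ((γ 0 0 : ℚ) * r.1 + (γ 1 0 : ℚ) * r.2, (γ 0 1 : ℚ) * r.1 + (γ 1 1 : ℚ) * r.2)

/-- The power `q^{n/d} = e^{2πi(n/d)τ}`. -/
def qpow (d : ℕ) (n : ℤ) (τ : ℍ) : ℂ :=
  Complex.exp (2 * (Real.pi : ℂ) * Complex.I * ((n : ℂ) / (d : ℂ)) * τ)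

/-- `h` is a weakly holomorphic modular function for `Γ₁(N)` with rational
Fourier coefficients: holomorphic on `ℍ`, `Γ₁(N)`-invariant, with a convergent
`q`-expansion at `i∞` having rational coefficients, and meromorphic at every cusp. -/
def IsWeaklyHolo1 (N : ℕ) (h : ℍ → ℂ) : Prop :=
  MDifferentiable 𝓘(ℂ) 𝓘(ℂ) h ∧
  (∀ γ ∈ Gamma1 N, ∀ τ : ℍ, h (γ • τ) = h τ) ∧
  (∃ n₀ : ℤ, ∃ c : ℕ → ℚ,
    ∀ τ : ℍ, HasSum (fun n : ℕ => (c n : ℂ) * qpow 1 (n₀ + n) τ) (h τ)) ∧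
  (∀ γ : SL(2, ℤ), ∃ n₀ : ℤ, ∃ c : ℕ → ℂ,
    ∀ τ : ℍ, HasSum (fun n : ℕ => c n * qpow N (n₀ + n) τ) (h (γ • τ)))

/-- `h` is a weakly holomorphic modular function for `Γ^1(N)` with rational
Fourier coefficients (the expansion at `i∞` being in powers of `q^{1/N}`). -/
def IsWeaklyHoloUp (N : ℕ) (h : ℍ → ℂ) : Prop :=
  MDifferentiable 𝓘(ℂ) 𝓘(ℂ) h ∧
  (∀ γ : SL(2, ℤ), GammaUpper N γ → ∀ τ : ℍ, h (γ • τ) = h τ) ∧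
  (∃ n₀ : ℤ, ∃ c : ℕ → ℚ,
    ∀ τ : ℍ, HasSum (fun n : ℕ => (c n : ℂ) * qpow N (n₀ + n) τ) (h τ)) ∧
  (∀ γ : SL(2, ℤ), ∃ n₀ : ℤ, ∃ c : ℕ → ℂ,
    ∀ τ : ℍ, HasSum (fun n : ℕ => c n * qpow N (n₀ + n) τ) (h (γ • τ)))

/-- The Weierstrass-unit generator
`f^1_{m,N} = (f_{(1/N,0)} - f_{(1/m,0)})/(f_{(2/m,0)} - f_{(1/m,0)})`. -/
def fUnit (m N : ℕ) (τ : ℍ) : ℂ :=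
  (fricke ((1 : ℚ) / N, 0) τ - fricke ((1 : ℚ) / m, 0) τ) /
    (fricke ((2 : ℚ) / m, 0) τ - fricke ((1 : ℚ) / m, 0) τ)

/-- `g_{1,4}(τ) = g_{(2/4,0)}(4τ)⁸ · g_{(1/4,0)}(4τ)⁻⁸`. -/
def gOne4 (τ : ℍ) : ℂ :=
  siegel ((2 : ℚ) / 4, 0) (hsmul 4 τ) ^ 8 * (siegel ((1 : ℚ) / 4, 0) (hsmul 4 τ) ^ 8)⁻¹

/-- Euler product `∏ (1 - q^(n+1))`. -/
def PP (q : ℂ) : ℂ := ∏' n : ℕ, (1 - q ^ (n + 1))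

/-- odd product `∏ (1 - q^(2 * n + 1))`. -/
def OD (q : ℂ) : ℂ := ∏' n : ℕ, (1 - q ^ (2 * n + 1))

lemma mult_of_inj {q : ℂ} (hq : ‖q‖ < 1) (f : ℕ → ℕ) (hf : Function.Injective f) (ε : ℂ)
    (hε : ‖ε‖ = 1) : Multipliable fun n : ℕ => 1 - ε * q ^ (f n) := by
  simp_rw [sub_eq_add_neg]
  apply multipliable_one_add_of_summable (f := fun n : ℕ => -(ε * q ^ (f n)))
  have := (summable_geometric_of_lt_one (norm_nonneg _) hq).comp_injective hf
  simpa [hε, Function.comp_def] using this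

lemma mult_of_inj' {q : ℂ} (hq : ‖q‖ < 1) (f : ℕ → ℕ) (hf : Function.Injective f) :
    Multipliable fun n : ℕ => 1 - q ^ (f n) := by
  simpa using mult_of_inj hq f hf 1 (by simp)

lemma norm_pow_lt {q : ℂ} (hq : ‖q‖ < 1) (k : ℕ) (hk : k ≠ 0) : ‖q ^ k‖ < 1 := by
  rw [norm_pow]; exact pow_lt_one₀ (norm_nonneg _) hq hk

lemma PP_ne_zero {q : ℂ} (hq : ‖q‖ < 1) : PP q ≠ 0 := by
  unfold PP
  simp_rw [sub_eq_add_neg]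
  refine tprod_one_add_ne_zero_of_summable (f := fun n ↦ -q ^ (n + 1)) ?_ ?_
  · intro i h
    have h1 : q ^ (i + 1) = 1 := by
      linear_combination -h
    have := norm_pow_lt hq (i + 1) (by simp)
    rw [h1] at this
    simp at this
  · simpa using (summable_nat_add_iff 1).mpr (summable_geometric_of_lt_one (norm_nonneg _) hq)

lemma PP_split {q : ℂ} (hq : ‖q‖ < 1) : PP q = OD q * PP (q ^ 2) := by
  unfold PP OD
  rw [← tprod_even_mul_odd (f := fun n : ℕ => 1 - q ^ (n + 1))]
  · congr 1
    apply tprod_congr; intro n; rw [← pow_mul]; congr 2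
  · exact mult_of_inj' hq (fun n => 2 * n + 1) (fun a b h => by simpa using h)
  · exact mult_of_inj' hq (fun n => 2 * n + 1 + 1) (fun a b h => by simpa using h)

lemma OD_ne_zero {q : ℂ} (hq : ‖q‖ < 1) : OD q ≠ 0 := by
  have := PP_ne_zero hq
  rw [PP_split hq] at this
  exact left_ne_zero_of_mul this

lemma OD_neg {q : ℂ} (hq : ‖q‖ < 1) : OD q * OD (-q) = OD (q ^ 2) := by
  unfold OD
  rw [← Multipliable.tprod_mul]
  · apply tprod_congr; intro n
    rw [Odd.neg_pow ⟨n, rfl⟩]; ring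
  · exact mult_of_inj' hq (fun n => 2 * n + 1) (fun a b h => by simpa using h)
  · exact mult_of_inj' (by simpa using hq) (fun n => 2 * n + 1) (fun a b h => by simpa using h)

lemma PP_neg {q : ℂ} (hq : ‖q‖ < 1) : PP (-q) * PP q * PP (q ^ 4) = PP (q ^ 2) ^ 3 := by
  have h1 := PP_split hq
  have h2 := PP_split (q := -q) (by simpa using hq)
  have h3 := PP_split (norm_pow_lt hq 2 (by simp))
  have h4 := OD_neg hq
  rw [neg_sq] at h2
  rw [← pow_mul] at h3
  norm_num at h3
  rw [h1, h2]
  linear_combination PP (q ^ 2) ^ 2 * PP (q ^ 4) * h4 - PP (q ^ 2) ^ 2 * h3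

lemma OD_shift {q : ℂ} (hq : ‖q‖ < 1) : OD q = (1 - q) * ∏' n : ℕ, (1 - q ^ (2 * n + 3)) := by
  unfold OD
  rw [_root_.tprod_eq_zero_mul']
  · simp; left; apply tprod_congr; intro n; ring
  · exact mult_of_inj' hq (fun n => 2 * (n+1) + 1) (fun a b h => by simpa using h)

/-- `A(q)` with `g = q⁻¹ A(q)`. -/
def AA (q : ℂ) : ℂ := PP (q ^ 2) ^ 24 * (PP q ^ 8)⁻¹ * (PP (q ^ 4) ^ 16)⁻¹
/-- `B(q)` with `g - 16 = q⁻¹ B(q)`. -/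
def BB (q : ℂ) : ℂ := PP q ^ 8 * (PP (q ^ 4) ^ 8)⁻¹

lemma AA_ne_zero {q : ℂ} (hq : ‖q‖ < 1) : AA q ≠ 0 := by
  have h1 := PP_ne_zero hq
  have h2 := PP_ne_zero (norm_pow_lt hq 2 (by simp))
  have h3 := PP_ne_zero (norm_pow_lt hq 4 (by simp))
  unfold AA; positivity

lemma BB_ne_zero {q : ℂ} (hq : ‖q‖ < 1) : BB q ≠ 0 := by
  have h1 := PP_ne_zero hq
  have h3 := PP_ne_zero (norm_pow_lt hq 4 (by simp))
  unfold BB; positivity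

lemma AA_eq {q : ℂ} (hq : ‖q‖ < 1) : AA q = OD (q ^ 2) ^ 16 * (OD q ^ 8)⁻¹ := by
  have h1 := PP_ne_zero hq
  have h2 := PP_ne_zero (norm_pow_lt hq 2 (by simp))
  have h3 := PP_ne_zero (norm_pow_lt hq 4 (by simp))
  have e1 := PP_split hq
  have e3 := PP_split (norm_pow_lt hq 2 (by simp))
  rw [← pow_mul] at e3
  norm_num at e3
  have o1 := OD_ne_zero hq
  unfold AA
  rw [e1]
  have : OD (q^2) = PP (q^2) / PP (q^4) := by rw [e3]; field_simp
  rw [this]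
  field_simp

lemma AA_neg {q : ℂ} (hq : ‖q‖ < 1) : AA (-q) = BB q := by
  have h1 := PP_ne_zero hq
  have h2 := PP_ne_zero (norm_pow_lt hq 2 (by simp))
  have h3 := PP_ne_zero (norm_pow_lt hq 4 (by simp))
  have h4 := PP_ne_zero (q := -q) (by simpa using hq)
  have := PP_neg hq
  unfold AA BB
  rw [neg_sq, neg_pow q 4]
  norm_num
  field_simp
  rw [show PP (q^2) ^ 24 = (PP (q^2) ^ 3)^8 by ring, ← this]
  ring

lemma BB_neg {q : ℂ} (hq : ‖q‖ < 1) : BB (-q) = AA q := by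
  rw [← AA_neg (q := -q) (by simpa using hq), neg_neg]

lemma PP_zero : PP 0 = 1 := by simp [PP]
lemma AA_zero : AA 0 = 1 := by simp [AA, PP_zero]
lemma BB_zero : BB 0 = 1 := by simp [BB, PP_zero]

lemma PP_diff : DifferentiableOn ℂ PP (Metric.ball (0 : ℂ) 1) :=
  ModularForm.differentiableOn_tprod_one_sub_pow

lemma PP_diff_pow (k : ℕ) (hk : k ≠ 0) :
    DifferentiableOn ℂ (fun q => PP (q ^ k)) (Metric.ball (0 : ℂ) 1) :=
  PP_diff.comp (f := fun q : ℂ => q ^ k) (by fun_prop) (fun q hq => by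
    simpa using norm_pow_lt (q := q) (by simpa using hq) k hk)

lemma AA_diff : DifferentiableOn ℂ AA (Metric.ball (0 : ℂ) 1) := by
  unfold AA
  refine ((((PP_diff_pow 2 (by simp)).pow 24).mul ((PP_diff.pow 8).inv ?_))).mul
    (((PP_diff_pow 4 (by simp)).pow 16).inv ?_)
  · intro q hq; exact pow_ne_zero _ (PP_ne_zero (by simpa using hq))
  · intro q hq; exact pow_ne_zero _ (PP_ne_zero (norm_pow_lt (by simpa using hq) 4 (by simp)))

lemma BB_diff : DifferentiableOn ℂ BB (Metric.ball (0 : ℂ) 1) := by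
  unfold BB
  refine (PP_diff.pow 8).mul (((PP_diff_pow 4 (by simp)).pow 8).inv ?_)
  · intro q hq; exact pow_ne_zero _ (PP_ne_zero (norm_pow_lt (by simpa using hq) 4 (by simp)))

lemma norm_exp_lt (z : ℂ) (hz : 0 < z.im) (r : ℝ) (hr : 0 < r) :
    ‖cexp (2 * π * Complex.I * (r * z))‖ < 1 := by
  rw [Complex.norm_exp]
  have : (2 * π * Complex.I * (r * z)).re = -(2 * π * r * z.im) := by
    simp; ring
  rw [this, Real.exp_lt_one_iff]
  have := Real.pi_pos
  have : 0 < 2 * π * r * z.im := by positivity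
  linarith

lemma siegel_half (τ : ℍ) (q : ℂ) (hq : q = cexp (2 * π * Complex.I * τ)) :
    siegel ((2 : ℚ) / 4, 0) (hsmul 4 τ) ^ 8 =
      cexp (2 * π * Complex.I * (-(4 / 3) * τ)) * OD (q ^ 2) ^ 16 := by
  have hq1 : ‖q‖ < 1 := by rw [hq]; simpa using norm_exp_lt τ τ.2 1 one_pos
  have hs : ((hsmul 4 τ : ℍ) : ℂ) = 4 * τ := by simp [hsmul]
  have hq2 := norm_pow_lt hq1 2 (by simp)
  have e1 : cexp (2 * (Real.pi : ℂ) * Complex.I * ((((2 : ℚ) / 4 : ℚ) : ℂ) * (4 * τ) + ((0 : ℚ) : ℂ)))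
      = q ^ 2 := by
    rw [hq, ← Complex.exp_nat_mul]; congr 1; push_cast; ring
  have e2 : ∀ n : ℕ, cexp (2 * (Real.pi : ℂ) * Complex.I *
      (((n : ℂ) + 1 + (((2 : ℚ) / 4 : ℚ) : ℂ)) * (4 * τ) + ((0 : ℚ) : ℂ))) = (q ^ 2) ^ (2 * n + 3) := by
    intro n
    rw [hq, ← pow_mul, ← Complex.exp_nat_mul]; congr 1; push_cast; ring
  have e3 : ∀ n : ℕ, cexp (2 * (Real.pi : ℂ) * Complex.I *
      (((n : ℂ) + 1 - (((2 : ℚ) / 4 : ℚ) : ℂ)) * (4 * τ) - ((0 : ℚ) : ℂ))) = (q ^ 2) ^ (2 * n + 1) := by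
    intro n
    rw [hq, ← pow_mul, ← Complex.exp_nat_mul]; congr 1; push_cast; ring
  unfold siegel
  simp only [hs, e1, e2, e3]
  rw [Multipliable.tprod_mul]
  rotate_left
  · exact mult_of_inj' hq2 (fun n => 2 * n + 3) (fun a b h => by simpa using h)
  · exact mult_of_inj' hq2 (fun n => 2 * n + 1) (fun a b h => by simpa using h)
  rw [show ∀ a b c d : ℂ, -a * b * (1 - q^2) * (c * d) = -a * b * (((1 - q^2) * c) * d) by
    intros; ring, ← OD_shift hq2]
  change (_ * (OD (q ^ 2) * OD (q ^ 2))) ^ 8 = _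
  rw [mul_pow, neg_mul, neg_pow, mul_pow, ← Complex.exp_nat_mul, ← Complex.exp_nat_mul]
  simp only [Rat.cast_zero, mul_zero, zero_mul, Complex.exp_zero, mul_one]
  rw [show OD (q ^ 2) ^ 16 = (OD (q^2) * OD (q^2)) ^ 8 by ring]
  norm_num
  left
  congr 1
  ring

lemma siegel_quarter (τ : ℍ) (q : ℂ) (hq : q = cexp (2 * π * Complex.I * τ)) :
    siegel ((1 : ℚ) / 4, 0) (hsmul 4 τ) ^ 8 =
      cexp (2 * π * Complex.I * (-(1 / 3) * τ)) * OD q ^ 8 := by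
  have hq1 : ‖q‖ < 1 := by rw [hq]; simpa using norm_exp_lt τ τ.2 1 one_pos
  have hs : ((hsmul 4 τ : ℍ) : ℂ) = 4 * τ := by simp [hsmul]
  have e1 : cexp (2 * (Real.pi : ℂ) * Complex.I * ((((1 : ℚ) / 4 : ℚ) : ℂ) * (4 * τ) + ((0 : ℚ) : ℂ)))
      = q := by
    rw [hq]; congr 1; push_cast; ring
  have e2 : ∀ n : ℕ, cexp (2 * (Real.pi : ℂ) * Complex.I *
      (((n : ℂ) + 1 + (((1 : ℚ) / 4 : ℚ) : ℂ)) * (4 * τ) + ((0 : ℚ) : ℂ))) = q ^ (2 * (2 * n + 1) + 3) := by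
    intro n
    rw [hq, ← Complex.exp_nat_mul]; congr 1; push_cast; ring
  have e3 : ∀ n : ℕ, cexp (2 * (Real.pi : ℂ) * Complex.I *
      (((n : ℂ) + 1 - (((1 : ℚ) / 4 : ℚ) : ℂ)) * (4 * τ) - ((0 : ℚ) : ℂ))) = q ^ (2 * (2 * n) + 3) := by
    intro n
    rw [hq, ← Complex.exp_nat_mul]; congr 1; push_cast; ring
  unfold siegel
  simp only [hs, e1, e2, e3]
  rw [Multipliable.tprod_mul]
  rotate_left
  · exact mult_of_inj' hq1 (fun n => 2 * (2 * n + 1) + 3) (fun a b h => by simpa using h)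
  · exact mult_of_inj' hq1 (fun n => 2 * (2 * n) + 3) (fun a b h => by simpa using h)
  have key : (∏' n : ℕ, (1 - q ^ (2 * (2 * n) + 3))) * (∏' n : ℕ, (1 - q ^ (2 * (2 * n + 1) + 3)))
      = ∏' n : ℕ, (1 - q ^ (2 * n + 3)) := by
    refine tprod_even_mul_odd (f := fun n : ℕ => 1 - q ^ (2 * n + 3)) ?_ ?_
    · exact mult_of_inj' hq1 (fun n => 2 * (2 * n) + 3) (fun a b h => by simpa using h)
    · exact mult_of_inj' hq1 (fun n => 2 * (2 * n + 1) + 3) (fun a b h => by simpa using h)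
  rw [mul_comm (∏' n : ℕ, (1 - q ^ (2 * (2 * n + 1) + 3))), key, mul_assoc, ← OD_shift hq1]
  rw [mul_pow, neg_mul, neg_pow, mul_pow, ← Complex.exp_nat_mul, ← Complex.exp_nat_mul]
  simp only [Rat.cast_zero, mul_zero, zero_mul, Complex.exp_zero, mul_one]
  norm_num
  left
  congr 1
  ring

lemma gOne4_eq (τ : ℍ) (q : ℂ) (hq : q = cexp (2 * π * Complex.I * τ)) :
    gOne4 τ = q⁻¹ * AA q := by
  have hq1 : ‖q‖ < 1 := by rw [hq]; simpa using norm_exp_lt τ τ.2 1 one_pos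
  unfold gOne4
  rw [siegel_half τ q hq, siegel_quarter τ q hq, AA_eq hq1]
  have e : cexp (2 * π * Complex.I * (-(4 / 3) * τ)) =
     cexp (2 * π * Complex.I * (-(1 / 3) * τ)) * q⁻¹ := by
    rw [hq, ← Complex.exp_neg, ← Complex.exp_add]; congr 1; ring
  have o1 := OD_ne_zero hq1
  have := Complex.exp_ne_zero (2 * π * Complex.I * (-(1 / 3) * τ))
  rw [e, mul_inv]
  field_simp

/-- eighth power of eta -/
def E8 (z : ℂ) : ℂ := ModularForm.eta z ^ 8

lemma E8_eq (z : ℂ) : E8 z = cexp (2 * π * Complex.I * z / 3) * PP (cexp (2 * π * Complex.I * z)) ^ 8 := by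
  unfold E8 ModularForm.eta PP
  rw [mul_pow]
  congr 1
  · rw [Function.Periodic.qParam, ← Complex.exp_nat_mul]; congr 1; push_cast; ring
  · congr 1; apply tprod_congr; intro n; rw [ModularForm.eta_q_eq_pow]

lemma E8_ne_zero {z : ℂ} (hz : 0 < z.im) : E8 z ≠ 0 :=
  pow_ne_zero _ (ModularForm.eta_ne_zero hz)

lemma sqrt_pow_eight {z : ℂ} (hz : z ≠ 0) : Complex.sqrt z ^ 8 = z ^ 4 := by
  unfold Complex.sqrt
  rw [← Complex.cpow_nat_mul, show ((8:ℕ) : ℂ) * (2⁻¹) = (4 : ℕ) by norm_num, Complex.cpow_natCast]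

lemma E8_S {z : ℂ} (hz : 0 < z.im) : E8 (-1 / z) = z ^ 4 * E8 z := by
  have h := ModularForm.eta_comp_eq_csqrt_I_inv hz
  have hz0 : z ≠ 0 := by rintro rfl; simp at hz
  simp only [Function.comp_apply, Pi.smul_apply, Pi.mul_apply, smul_eq_mul] at h
  unfold E8
  rw [h, mul_pow, mul_pow, inv_pow, sqrt_pow_eight hz0, sqrt_pow_eight Complex.I_ne_zero, Complex.I_pow_four]
  simp

/-- `Q = e^{πiz}` -/
def QQ (z : ℂ) : ℂ := cexp (π * Complex.I * z)
/-- level two function with `gOne4 τ = GG (2τ)` -/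
def GG (z : ℂ) : ℂ := (QQ z)⁻¹ * AA (QQ z)
/-- companion of `GG` -/
def UU (z : ℂ) : ℂ := (QQ z)⁻¹ * BB (QQ z)

lemma QQ_ne (z : ℂ) : QQ z ≠ 0 := Complex.exp_ne_zero _

lemma QQ_norm {z : ℂ} (hz : 0 < z.im) : ‖QQ z‖ < 1 := by
  have := norm_exp_lt z hz (1/2) (by norm_num)
  unfold QQ
  convert this using 3
  push_cast; ring

lemma GG_ne {z : ℂ} (hz : 0 < z.im) : GG z ≠ 0 :=
  mul_ne_zero (inv_ne_zero (QQ_ne z)) (AA_ne_zero (QQ_norm hz))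
lemma UU_ne {z : ℂ} (hz : 0 < z.im) : UU z ≠ 0 :=
  mul_ne_zero (inv_ne_zero (QQ_ne z)) (BB_ne_zero (QQ_norm hz))

lemma PP_E8 (z : ℂ) (q : ℂ) (hq : q = cexp (2 * π * Complex.I * z)) : PP q ^ 8 = cexp (-(2 * π * Complex.I * z / 3)) * E8 z := by
  rw [E8_eq, hq, ← mul_assoc, ← Complex.exp_add]; simp

lemma GG_E8 {z : ℂ} (hz : 0 < z.im) : GG z = E8 z ^ 3 / (E8 (z / 2) * E8 (2 * z) ^ 2) := by
  unfold GG AA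
  have h1 := PP_E8 (z/2) (QQ z) (by unfold QQ; congr 1; ring)
  have h2 := PP_E8 z (QQ z ^ 2) (by unfold QQ; rw [← Complex.exp_nat_mul]; congr 1; push_cast; ring)
  have h3 := PP_E8 (2 * z) (QQ z ^ 4) (by unfold QQ; rw [← Complex.exp_nat_mul]; congr 1; push_cast; ring)
  rw [show PP (QQ z ^ 2) ^ 24 = (PP (QQ z ^ 2) ^ 8) ^ 3 by ring, show PP (QQ z ^ 4) ^ 16 = (PP (QQ z ^ 4) ^ 8) ^ 2 by ring,
   h1, h2, h3]
  have e1 := E8_ne_zero (z := z / 2) (by simp [hz])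
  have e2 := E8_ne_zero (z := 2 * z) (by simp [hz])
  simp only [mul_pow, mul_inv, ← Complex.exp_nat_mul, ← Complex.exp_neg, QQ, div_eq_mul_inv]
  rw [show ∀ a b c d e f g : ℂ, a * (b * c * (d * e) * (f * g)) = (a * b * d * f) * (c * (e * g)) by intros; ring]
  rw [← Complex.exp_add, ← Complex.exp_add, ← Complex.exp_add]
  rw [show (-(π * Complex.I * z) + ((3:ℕ):ℂ) * -(2 * π * Complex.I * z * 3⁻¹) + -(-(2 * π * Complex.I * (z * 2⁻¹) * 3⁻¹)) +
    -(((2:ℕ):ℂ) * -(2 * π * Complex.I * (2 * z) * 3⁻¹))) = 0 by push_cast; ring]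
  simp

lemma UU_E8 {z : ℂ} (hz : 0 < z.im) : UU z = E8 (z / 2) / E8 (2 * z) := by
  unfold UU BB
  have h1 := PP_E8 (z/2) (QQ z) (by unfold QQ; congr 1; ring)
  have h3 := PP_E8 (2 * z) (QQ z ^ 4) (by unfold QQ; rw [← Complex.exp_nat_mul]; congr 1; push_cast; ring)
  rw [h1, h3]
  have e2 := E8_ne_zero (z := 2 * z) (by simp [hz])
  simp only [mul_inv, ← Complex.exp_neg, QQ, div_eq_mul_inv]
  rw [show ∀ a b c d e : ℂ, a * (b * c * (d * e)) = (a * b * d) * (c * e) by intros; ring]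
  rw [← Complex.exp_add, ← Complex.exp_add]
  rw [show (-(π * Complex.I * z) + -(2 * π * Complex.I * (z * 2⁻¹) * 3⁻¹) +
    -(-(2 * π * Complex.I * (2 * z) * 3⁻¹))) = 0 by ring]
  simp

lemma im_S {z : ℂ} (hz : 0 < z.im) : 0 < (-1 / z).im := by
  have hz0 : z ≠ 0 := by rintro rfl; simp at hz
  have : 0 < normSq z := by simpa [Complex.normSq_pos] using hz0
  have e : (-1 / z).im = z.im / normSq z := by
    rw [neg_div, one_div]; simp [Complex.inv_im, neg_div]
  rw [e]; positivity

lemma E8_S' {z : ℂ} (hz : 0 < z.im) : E8 ((-1 / z) / 2) = (2 * z) ^ 4 * E8 (2 * z) := by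
  rw [← E8_S (by simp [hz])]; congr 1
  have hz0 : z ≠ 0 := by rintro rfl; simp at hz
  field_simp

lemma E8_S'' {z : ℂ} (hz : 0 < z.im) : E8 (2 * (-1 / z)) = (z / 2) ^ 4 * E8 (z / 2) := by
  rw [← E8_S (by simp [hz])]; congr 1
  have hz0 : z ≠ 0 := by rintro rfl; simp at hz
  field_simp

lemma GG_S' {z : ℂ} (hz : 0 < z.im) : GG (-1 / z) = 16 * GG z / UU z := by
  have hz0 : z ≠ 0 := by rintro rfl; simp at hz
  have e1 := E8_ne_zero (z := z / 2) (by simp [hz])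
  have e2 := E8_ne_zero (z := 2 * z) (by simp [hz])
  rw [GG_E8 (im_S hz), GG_E8 hz, UU_E8 hz, E8_S hz, E8_S' hz, E8_S'' hz]
  field_simp
  norm_num

lemma UU_S' {z : ℂ} (hz : 0 < z.im) : UU (-1 / z) = 256 / UU z := by
  have hz0 : z ≠ 0 := by rintro rfl; simp at hz
  have e1 := E8_ne_zero (z := z / 2) (by simp [hz])
  have e2 := E8_ne_zero (z := 2 * z) (by simp [hz])
  rw [UU_E8 (im_S hz), UU_E8 hz, E8_S' hz, E8_S'' hz]
  field_simp
  norm_num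

lemma QQ_T (z : ℂ) : QQ (z + 1) = - QQ z := by
  unfold QQ
  rw [mul_add, Complex.exp_add, mul_one, Complex.exp_pi_mul_I]; ring

lemma GG_T' {z : ℂ} (hz : 0 < z.im) : GG (z + 1) = - UU z := by
  unfold GG UU
  rw [QQ_T, AA_neg (QQ_norm hz), inv_neg]; ring
lemma UU_T' {z : ℂ} (hz : 0 < z.im) : UU (z + 1) = - GG z := by
  unfold GG UU
  rw [QQ_T, BB_neg (QQ_norm hz), inv_neg]; ring

lemma GG_diff {z : ℂ} (hz : 0 < z.im) : DifferentiableAt ℂ GG z := by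
  unfold GG
  have hQ : DifferentiableAt ℂ QQ z := by unfold QQ; fun_prop
  refine (hQ.inv (QQ_ne z)).mul (DifferentiableAt.comp z (g := AA) ?_ hQ)
  exact AA_diff.differentiableAt (Metric.isOpen_ball.mem_nhds (by simpa using QQ_norm hz))
lemma UU_diff {z : ℂ} (hz : 0 < z.im) : DifferentiableAt ℂ UU z := by
  unfold UU
  have hQ : DifferentiableAt ℂ QQ z := by unfold QQ; fun_prop
  refine (hQ.inv (QQ_ne z)).mul (DifferentiableAt.comp z (g := BB) ?_ hQ)
  exact BB_diff.differentiableAt (Metric.isOpen_ball.mem_nhds (by simpa using QQ_norm hz))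

open scoped ModularForm in
lemma const_of_bounded (Γ : Subgroup SL(2, ℤ)) [Γ.FiniteIndex] (f : ℍ → ℂ)
    (hd : MDifferentiable 𝓘(ℂ) 𝓘(ℂ) f) (hinv : ∀ γ ∈ Γ, ∀ τ : ℍ, f (γ • τ) = f τ)
    (hb : ∀ γ : SL(2, ℤ), IsBoundedAtImInfty (fun τ : ℍ => f (γ • τ))) :
    ∃ c, ∀ τ, f τ = c := by
  have hsl : ∀ γ : SL(2, ℤ), (f ∣[(0 : ℤ)] γ) = fun τ : ℍ => f (γ • τ) := by
    intro γ; ext τ; rw [ModularForm.SL_slash_apply]; simp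
  let F : ModularForm (Γ.map (Matrix.SpecialLinearGroup.mapGL ℝ)) 0 :=
    { toFun := f
      slash_action_eq' := by
        rintro A ⟨A, hA, rfl⟩
        have := hsl A
        ext τ
        rw [← hinv A hA τ]
        exact congrFun this τ
      holo' := hd
      bdd_at_cusps' := by
        intro c hc
        rw [Subgroup.IsArithmetic.isCusp_iff_isCusp_SL2Z] at hc
        rw [OnePoint.isBoundedAt_iff_forall_SL2Z hc]
        intro γ _
        rw [hsl γ]
        exact hb γ }
  obtain ⟨c, hc⟩ := ModularForm.eq_const_of_weight_zero F
  exact ⟨c, fun τ => congrFun hc τ⟩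

open scoped ModularForm in
lemma inv_of_generators (f : ℍ → ℂ) (hS : ∀ τ : ℍ, f (ModularGroup.S • τ) = f τ)
    (hT : ∀ τ : ℍ, f (ModularGroup.T • τ) = f τ) (γ : SL(2, ℤ)) (τ : ℍ) : f (γ • τ) = f τ := by
  have hsl : ∀ γ : SL(2, ℤ), (f ∣[(0 : ℤ)] γ) = fun τ : ℍ => f (γ • τ) := by
    intro γ; ext τ; rw [ModularForm.SL_slash_apply]; simp
  have := SlashInvariantForm.slash_action_generators_SL2Z (f := f) (k := 0)
    (by rw [hsl]; ext τ; exact hS τ) (by rw [hsl]; ext τ; exact hT τ) γ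
  rw [hsl] at this
  exact congrFun this τ

lemma coe_S (τ : ℍ) : ((ModularGroup.S • τ : ℍ) : ℂ) = -1 / τ := by
  rw [UpperHalfPlane.modular_S_smul]; simp [neg_div, inv_neg]
lemma coe_T (τ : ℍ) : ((ModularGroup.T • τ : ℍ) : ℂ) = τ + 1 := by
  rw [UpperHalfPlane.modular_T_smul]; simp [add_comm]

lemma GG_S (τ : ℍ) : GG ((ModularGroup.S • τ : ℍ) : ℂ) = 16 * GG τ / UU τ := by
  rw [coe_S]; exact GG_S' τ.2
lemma UU_S (τ : ℍ) : UU ((ModularGroup.S • τ : ℍ) : ℂ) = 256 / UU τ := by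
  rw [coe_S]; exact UU_S' τ.2
lemma GG_T (τ : ℍ) : GG ((ModularGroup.T • τ : ℍ) : ℂ) = - UU τ := by
  rw [coe_T]; exact GG_T' τ.2
lemma UU_T (τ : ℍ) : UU ((ModularGroup.T • τ : ℍ) : ℂ) = - GG τ := by
  rw [coe_T]; exact UU_T' τ.2

/-- auxiliary level one function, shown to vanish -/
def phi (τ : ℂ) : ℂ := (GG τ - UU τ - 16) ^ 3 / (GG τ * UU τ)

lemma phi_S (τ : ℍ) : phi ((ModularGroup.S • τ : ℍ) : ℂ) = phi τ := by
  unfold phi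
  rw [GG_S, UU_S]
  have h1 : GG (τ : ℂ) ≠ 0 := GG_ne τ.2
  have h2 : UU (τ : ℂ) ≠ 0 := UU_ne τ.2
  field_simp
  ring

lemma phi_T (τ : ℍ) : phi ((ModularGroup.T • τ : ℍ) : ℂ) = phi τ := by
  unfold phi
  rw [GG_T, UU_T]
  congr 1 <;> ring

lemma mdiff_of (f : ℂ → ℂ) (hf : ∀ z : ℂ, 0 < z.im → DifferentiableAt ℂ f z) :
    MDifferentiable 𝓘(ℂ) 𝓘(ℂ) (fun τ : ℍ => f τ) := by
  rw [UpperHalfPlane.mdifferentiable_iff]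
  refine .congr (fun z hz ↦ (hf z hz).differentiableWithinAt) fun z hz ↦ ?_
  simp [ofComplex_apply_of_im_pos hz]

lemma phi_diff {z : ℂ} (hz : 0 < z.im) : DifferentiableAt ℂ phi z := by
  unfold phi
  refine DifferentiableAt.div ((((GG_diff hz).sub (UU_diff hz)).sub_const _).pow 3)
    ((GG_diff hz).mul (UU_diff hz)) (mul_ne_zero (GG_ne hz) (UU_ne hz))

open Filter Topology in
lemma QQ_tendsto : Tendsto (fun τ : ℍ => QQ τ) atImInfty (𝓝 0) := by
  have := UpperHalfPlane.qParam_tendsto_atImInfty (h := 2) (by norm_num)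
  refine this.congr fun τ => ?_
  unfold QQ Function.Periodic.qParam
  congr 1; push_cast; ring

open Filter Topology in
lemma phi_tendsto : Tendsto (fun τ : ℍ => phi τ) atImInfty (𝓝 0) := by
  have hA : DifferentiableAt ℂ AA 0 := AA_diff.differentiableAt (Metric.ball_mem_nhds 0 one_pos)
  have hB : DifferentiableAt ℂ BB 0 := BB_diff.differentiableAt (Metric.ball_mem_nhds 0 one_pos)
  set C : ℂ → ℂ := dslope (fun q => AA q - BB q) 0 with hC
  have hCc : ContinuousAt C 0 := by
    rw [hC, continuousAt_dslope_same]; exact hA.sub hB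
  let F : ℂ → ℂ := fun q => (C q - 16) ^ 3 * q ^ 2 / (AA q * BB q)
  have hF : ContinuousAt F 0 := by
    refine ContinuousAt.div ?_ (hA.continuousAt.mul hB.continuousAt) (by simp [AA_zero, BB_zero])
    exact ((hCc.sub continuousAt_const).pow 3).mul (by fun_prop)
  have h0 : F 0 = 0 := by simp [F]
  have ht := hF.tendsto.comp QQ_tendsto
  rw [h0] at ht
  refine ht.congr fun τ => ?_
  have hq := QQ_ne τ
  have hn := QQ_norm τ.2
  have h1 := AA_ne_zero hn
  have h2 := BB_ne_zero hn
  change AA (QQ (τ : ℂ)) ≠ 0 at h1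
  change BB (QQ (τ : ℂ)) ≠ 0 at h2
  have hCv : C (QQ τ) = (QQ τ)⁻¹ * (AA (QQ τ) - BB (QQ τ)) := by
    rw [hC, dslope_of_ne _ hq, slope_def_field, AA_zero, BB_zero]; simp [div_eq_inv_mul]
  simp only [F, Function.comp_apply, phi, GG, UU, hCv]
  field_simp

open Filter Topology in
lemma UU_eq (τ : ℍ) : UU τ = GG τ - 16 := by
  have hinv := inv_of_generators (fun τ : ℍ => phi τ) phi_S phi_T
  obtain ⟨c, hc⟩ := const_of_bounded ⊤ (fun τ : ℍ => phi τ) (mdiff_of phi fun z hz => phi_diff hz)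
    (fun γ _ τ => hinv γ τ) (fun γ => by
      have : (fun τ : ℍ => phi ((γ • τ : ℍ) : ℂ)) = fun τ : ℍ => phi τ := by
        ext τ; exact hinv γ τ
      rw [this]
      exact phi_tendsto.isBigO_one ℝ)
  have hc0 : c = 0 := by
    have h := phi_tendsto
    simp only [hc] at h
    exact tendsto_nhds_unique tendsto_const_nhds h
  have h := hc τ
  rw [hc0] at h
  simp only [phi] at h
  rw [div_eq_zero_iff] at h
  rcases h with h | h
  · have := pow_eq_zero_iff (by norm_num) |>.1 h
    linear_combination -this
  · exact absurd h (mul_ne_zero (GG_ne τ.2) (UU_ne τ.2))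

lemma GG16_ne (τ : ℍ) : GG τ - 16 ≠ 0 := by rw [← UU_eq]; exact UU_ne τ.2

lemma GGS (τ : ℍ) : GG ((ModularGroup.S • τ : ℍ) : ℂ) = 16 * GG τ / (GG τ - 16) := by
  rw [GG_S, UU_eq]
lemma GGT (τ : ℍ) : GG ((ModularGroup.T • τ : ℍ) : ℂ) = 16 - GG τ := by
  rw [GG_T, UU_eq]; ring
lemma GGSi (τ : ℍ) : GG ((ModularGroup.S⁻¹ • τ : ℍ) : ℂ) = 16 * GG τ / (GG τ - 16) := by
  have h := GGS (ModularGroup.S⁻¹ • τ)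
  rw [smul_inv_smul] at h
  have h1 := GG16_ne (ModularGroup.S⁻¹ • τ)
  have h2 := GG16_ne τ
  rw [eq_div_iff h2, h]
  field_simp
  ring
lemma GGTi (τ : ℍ) : GG ((ModularGroup.T⁻¹ • τ : ℍ) : ℂ) = 16 - GG τ := by
  have h := GGT (ModularGroup.T⁻¹ • τ)
  rw [smul_inv_smul] at h
  rw [h]; ring

/-- the action of `SL₂(ℤ/2)` on the Hauptmodul `GG` -/
def tab (a b c d : ZMod 2) (x : ℂ) : ℂ :=
  if c = 0 then (if b = 0 then x else 16 - x)
  else if d = 0 then (if a = 0 then 16 * x / (x - 16) else -256 / (x - 16))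
  else (if a = 0 then 16 * (x - 16) / x else 256 / x)

lemma tab_S (a b c d : ZMod 2) (h : a * d - b * c = 1) (x : ℂ) (hx : x ≠ 0) (hx' : x - 16 ≠ 0) :
    tab a b c d (16 * x / (x - 16)) = tab b a d c x := by
  have e : 16 * x / (x - 16) - 16 = 256 / (x - 16) := by field_simp; ring
  have h01 : (1 : ZMod 2) ≠ 0 := by decide
  have key : ∀ y : ZMod 2, y = 0 ∨ y = 1 := by decide
  rcases key a with rfl | rfl <;> rcases key b with rfl | rfl <;> rcases key c with rfl | rfl <;>
   rcases key d with rfl | rfl <;>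
    first
    | (exfalso; revert h; decide)
    | (simp only [tab, h01, if_true, if_false, e]; done)
    | (simp only [tab, h01, if_true, if_false, e]; field_simp; done)
    | (simp only [tab, h01, if_true, if_false, e]; field_simp; ring)

lemma tab_T (a b c d : ZMod 2) (h : a * d - b * c = 1) (x : ℂ) (hx : x ≠ 0) (hx' : x - 16 ≠ 0) :
    tab a b c d (16 - x) = tab a (a + b) c (c + d) x := by
  have h01 : (1 : ZMod 2) ≠ 0 := by decide
  have h2 : (1 : ZMod 2) + 1 = 0 := by decide
  have key : ∀ y : ZMod 2, y = 0 ∨ y = 1 := by decide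
  have e : 16 - x - 16 = - x := by ring
  have e' : 16 - x = - (x - 16) := by ring
  rcases key a with rfl | rfl <;> rcases key b with rfl | rfl <;> rcases key c with rfl | rfl <;>
   rcases key d with rfl | rfl <;>
    first
    | (exfalso; revert h; decide)
    | (simp only [tab, h01, if_true, if_false, h2, add_zero, zero_add, e]; done)
    | (simp only [tab, h01, if_true, if_false, h2, add_zero, zero_add, e]; ring; done)
    | (simp only [tab, h01, if_true, if_false, h2, add_zero, zero_add, e]; rw [e']; field_simp; done)

lemma neg_zmod2 (y : ZMod 2) : - y = y := by revert y; decide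

lemma det_zmod2 (γ : SL(2, ℤ)) :
    ((γ 0 0 : ℤ) : ZMod 2) * ((γ 1 1 : ℤ) : ZMod 2) - ((γ 0 1 : ℤ) : ZMod 2) * ((γ 1 0 : ℤ) : ZMod 2) = 1 := by
  have := γ.det_coe
  rw [Matrix.det_fin_two] at this
  exact_mod_cast congrArg (fun n : ℤ => (n : ZMod 2)) this

lemma GG_table (γ : SL(2, ℤ)) : ∀ τ : ℍ,
    GG ((γ • τ : ℍ) : ℂ) = tab (γ 0 0 : ℤ) (γ 0 1 : ℤ) (γ 1 0 : ℤ) (γ 1 1 : ℤ) (GG τ) := by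
  have hγ : γ ∈ Subgroup.closure {ModularGroup.S, ModularGroup.T} := by
    rw [SpecialLinearGroup.SL2Z_generators]; trivial
  induction hγ using Subgroup.closure_induction_right with
  | one => intro τ; simp [tab]
  | mul_right x hx y hy ih =>
    intro τ
    rw [mul_smul, ih]
    simp only [Set.mem_insert_iff, Set.mem_singleton_iff] at hy
    rcases hy with rfl | rfl
    · rw [GGS, tab_S _ _ _ _ (det_zmod2 x) _ (GG_ne τ.2) (GG16_ne τ)]
      simp [Matrix.mul_apply, Fin.sum_univ_two, ModularGroup.coe_S, Matrix.SpecialLinearGroup.coe_mul, Matrix.SpecialLinearGroup.coe_inv, neg_zmod2]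
    · rw [GGT, tab_T _ _ _ _ (det_zmod2 x) _ (GG_ne τ.2) (GG16_ne τ)]
      simp [Matrix.mul_apply, Fin.sum_univ_two, ModularGroup.coe_T, Matrix.SpecialLinearGroup.coe_mul]
  | mul_inv_cancel x hx y hy ih =>
    intro τ
    rw [mul_smul, ih]
    simp only [Set.mem_insert_iff, Set.mem_singleton_iff] at hy
    rcases hy with rfl | rfl
    · rw [GGSi, tab_S _ _ _ _ (det_zmod2 x) _ (GG_ne τ.2) (GG16_ne τ)]
      simp [Matrix.mul_apply, Fin.sum_univ_two, ModularGroup.coe_S, Matrix.SpecialLinearGroup.coe_mul, Matrix.SpecialLinearGroup.coe_inv, neg_zmod2, Matrix.adjugate_fin_two]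
    · rw [GGTi, tab_T _ _ _ _ (det_zmod2 x) _ (GG_ne τ.2) (GG16_ne τ)]
      simp [Matrix.mul_apply, Fin.sum_univ_two, ModularGroup.coe_T, Matrix.SpecialLinearGroup.coe_mul, Matrix.SpecialLinearGroup.coe_inv, Matrix.adjugate_fin_two, neg_zmod2]

lemma hsmul_two_coe (τ : ℍ) : ((hsmul 2 τ : ℍ) : ℂ) = 2 * τ := by simp [hsmul]

lemma gOne4_GG (τ : ℍ) : gOne4 τ = GG (hsmul 2 τ : ℍ) := by
  rw [gOne4_eq τ _ rfl, hsmul_two_coe]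
  unfold GG QQ
  rw [show (2 * π * Complex.I * τ : ℂ) = π * Complex.I * (2 * τ) by ring]

/-- conjugation by `diag(2,1)` -/
lemma hsmul_conj (γ : SL(2, ℤ)) (e : ℤ) (he : γ 1 0 = 2 * e) (τ : ℍ) :
    ∃ δ : SL(2, ℤ), δ 0 0 = γ 0 0 ∧ δ 0 1 = 2 * γ 0 1 ∧ δ 1 0 = e ∧ δ 1 1 = γ 1 1 ∧
      hsmul 2 (γ • τ) = δ • hsmul 2 τ := by
  have hdet := γ.det_coe
  rw [Matrix.det_fin_two] at hdet
  obtain ⟨δ, hδ⟩ : ∃ δ : SL(2, ℤ), δ.1 = !![γ 0 0, 2 * γ 0 1; e, γ 1 1] :=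
    ⟨⟨!![γ 0 0, 2 * γ 0 1; e, γ 1 1], by
      rw [Matrix.det_fin_two_of]; rw [he] at hdet; linarith⟩, rfl⟩
  refine ⟨δ, by simp [hδ], by simp [hδ], by simp [hδ], by simp [hδ], ?_⟩
  · ext
    rw [hsmul_two_coe, UpperHalfPlane.coe_specialLinearGroup_apply, UpperHalfPlane.coe_specialLinearGroup_apply]
    simp [hsmul_two_coe, he, hδ]
    ring

lemma gOne4_gamma1 (γ : SL(2, ℤ)) (hγ : γ ∈ Gamma1 4) (τ : ℍ) : gOne4 (γ • τ) = gOne4 τ := by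
  rw [Gamma1_mem] at hγ
  obtain ⟨h0, h1, h2⟩ := hγ
  rw [ZMod.intCast_zmod_eq_zero_iff_dvd] at h2
  obtain ⟨k, hk⟩ := h2
  obtain ⟨δ, d0, d1, d2, d3, hδ⟩ := hsmul_conj γ (2 * k) (by rw [hk]; push_cast; ring) τ
  rw [gOne4_GG, hδ, GG_table, gOne4_GG, d0, d1, d2, d3]
  have t2 : (2 : ZMod 2) = 0 := by decide
  simp [tab, t2]

/-- The matrix `[[1,0],[2,1]]`. -/
def VV : SL(2, ℤ) := ⟨!![1, 0; 2, 1], by simp [Matrix.det_fin_two_of]⟩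

lemma gOne4_VV (τ : ℍ) : gOne4 (VV • τ) = 256 / gOne4 τ := by
  obtain ⟨δ, d0, d1, d2, d3, hδ⟩ := hsmul_conj VV 1 (by simp [VV]) τ
  rw [gOne4_GG, hδ, GG_table, gOne4_GG, d0, d1, d2, d3]
  simp [tab, VV]

lemma gOne4_SS (τ : ℍ) (x : ℂ) (hx : x = cexp (2 * π * Complex.I * τ / 4)) :
    gOne4 (ModularGroup.S • τ) = 16 * AA x / BB x := by
  have him : 0 < ((τ : ℂ) / 2).im := by
    have : ((τ : ℂ) / 2).im = τ.im / 2 := by simp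
    rw [this]; have := τ.im_pos; positivity
  rw [gOne4_GG, hsmul_two_coe, coe_S]
  have e : 2 * (-1 / (τ : ℂ)) = -1 / ((τ : ℂ) / 2) := by
    have := τ.ne_zero; field_simp
  have hxQ : QQ ((τ : ℂ) / 2) = x := by
    rw [hx]; unfold QQ; congr 1; ring
  rw [e, GG_S' him]
  unfold GG UU
  rw [hxQ]
  have := BB_ne_zero (q := x) (by rw [← hxQ]; exact QQ_norm him)
  have : x ≠ 0 := by rw [← hxQ]; exact QQ_ne _
  field_simp

lemma gOne4_ne (τ : ℍ) : gOne4 τ ≠ 0 := by rw [gOne4_GG]; exact GG_ne (hsmul 2 τ).2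
lemma gOne4_16_ne (τ : ℍ) : gOne4 τ - 16 ≠ 0 := by rw [gOne4_GG]; exact GG16_ne (hsmul 2 τ)

lemma AA_sub {q : ℂ} (hq : ‖q‖ < 1) : AA q - 16 * q = BB q := by
  by_cases h0 : q = 0
  · subst h0; simp [AA_zero, BB_zero]
  · have him := Function.Periodic.im_invQParam_pos_of_norm_lt_one (h := 2) (by norm_num) hq h0
    have h1 := Function.Periodic.qParam_right_inv (h := 2) (by norm_num) h0
    have h2 : QQ (Function.Periodic.invQParam 2 q) = q := by
      conv_rhs => rw [← h1]
      unfold QQ Function.Periodic.qParam; congr 1; push_cast; ring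
    have := UU_eq ⟨_, him⟩
    simp only [UU, GG] at this
    change (QQ (Function.Periodic.invQParam 2 q))⁻¹ * BB (QQ (Function.Periodic.invQParam 2 q)) = (QQ (Function.Periodic.invQParam 2 q))⁻¹ * AA (QQ (Function.Periodic.invQParam 2 q)) - 16 at this
    rw [h2] at this
    field_simp at this
    linear_combination -this

lemma gOne4_16_eq (τ : ℍ) (q : ℂ) (hq : q = cexp (2 * π * Complex.I * τ)) :
    gOne4 τ - 16 = q⁻¹ * BB q := by
  have hq1 : ‖q‖ < 1 := by rw [hq]; simpa using norm_exp_lt τ τ.2 1 one_pos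
  have : q ≠ 0 := by rw [hq]; exact Complex.exp_ne_zero _
  rw [gOne4_eq τ q hq, ← AA_sub hq1]; field_simp

lemma gOne4_SS16 (τ : ℍ) (x : ℂ) (hx : x = cexp (2 * π * Complex.I * τ / 4)) :
    gOne4 (ModularGroup.S • τ) - 16 = 256 * x / BB x := by
  have hx1 : ‖x‖ < 1 := by
    rw [hx]
    have := norm_exp_lt τ τ.2 (1/4) (by norm_num)
    convert this using 3
    push_cast; change _ = _ * (_ * (τ : ℂ)); ring
  have hb := BB_ne_zero hx1
  rw [gOne4_SS τ x hx]
  have := AA_sub hx1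
  field_simp
  linear_combination 16 * this

lemma gOne4_mdiff : MDifferentiable 𝓘(ℂ) 𝓘(ℂ) gOne4 := by
  have : gOne4 = fun τ : ℍ => (fun z : ℂ => GG (2 * z)) τ := by
    ext τ; rw [gOne4_GG, hsmul_two_coe]
  rw [this]
  refine mdiff_of (fun z : ℂ => GG (2 * z)) fun z hz => ?_
  exact DifferentiableAt.comp z (g := GG) (f := fun z => 2 * z) (GG_diff (by simpa using hz)) (by fun_prop)

/-- `F` is represented by the power series `d` on the unit disc. -/
def HasS (F : ℂ → ℂ) (d : PowerSeries ℂ) : Prop :=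
  ∀ q : ℂ, ‖q‖ < 1 → HasSum (fun n : ℕ => d.coeff n * q ^ n) (F q)

/-- `F` is represented by a rational power series on the unit disc. -/
def RatS (F : ℂ → ℂ) : Prop := ∃ s : PowerSeries ℚ, HasS F (s.map (algebraMap ℚ ℂ))

lemma hasS_of_diff {F : ℂ → ℂ} (hF : DifferentiableOn ℂ F (Metric.ball 0 1)) :
    HasS F (PowerSeries.mk fun n => (n.factorial : ℂ)⁻¹ * iteratedDeriv n F 0) := by
  intro q hq
  have := Complex.hasSum_taylorSeries_on_ball (f := F) (c := 0) (r := 1) (z := q) (by simpa using hF) (by simpa using hq)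
  refine this.congr_fun ?_
  intro n
  simp; ring

lemma HasS.congr {F G : ℂ → ℂ} {d} (h : HasS F d) (e : ∀ q : ℂ, ‖q‖ < 1 → G q = F q) : HasS G d := by
  intro q hq; rw [e q hq]; exact h q hq

lemma HasS.fps {F : ℂ → ℂ} {d} (h : HasS F d) :
    HasFPowerSeriesOnBall F (FormalMultilinearSeries.ofScalars ℂ (fun n => d.coeff n)) 0 1 where
  r_le := by
    refine ENNReal.le_of_forall_nnreal_lt fun r hr => ?_
    apply FormalMultilinearSeries.le_radius_of_summable
    have hr1 : (r : ℝ) < 1 := by exact_mod_cast hr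
    have := (h (r : ℂ) (by simpa using hr1)).summable.norm
    simpa using this
  r_pos := one_pos
  hasSum := by
    intro y hy
    have hy1 : ‖y‖ < 1 := by
      have := hy
      rw [← ENNReal.ofReal_one, Metric.eball_ofReal] at this
      simpa using this
    rw [zero_add]
    refine (h y hy1).congr_fun fun n => ?_
    simp [FormalMultilinearSeries.ofScalars_apply_eq, mul_comm]

lemma HasS.diff {F : ℂ → ℂ} {d} (h : HasS F d) : DifferentiableOn ℂ F (Metric.ball 0 1) := by
  have := h.fps.differentiableOn
  rwa [← ENNReal.ofReal_one, Metric.eball_ofReal] at this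

lemma HasS.unique {F : ℂ → ℂ} {d e} (h : HasS F d) (h' : HasS F e) : d = e := by
  have := HasFPowerSeriesAt.eq_formalMultilinearSeries h.fps.hasFPowerSeriesAt h'.fps.hasFPowerSeriesAt
  have := FormalMultilinearSeries.ofScalars_series_injective ℂ ℂ this
  ext n; exact congrFun this n

lemma HasS.mul {F G : ℂ → ℂ} {d e} (h : HasS F d) (h' : HasS G e) :
    HasS (fun q => F q * G q) (d * e) := by
  intro q hq
  have s1 := (h q hq).summable.norm
  have s2 := (h' q hq).summable.norm
  have := tsum_mul_tsum_eq_tsum_sum_antidiagonal_of_summable_norm s1 s2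
  have s3 := (summable_norm_sum_mul_antidiagonal_of_summable_norm s1 s2).of_norm
  rw [(h q hq).tsum_eq, (h' q hq).tsum_eq] at this
  have hs := s3.hasSum
  rw [← this] at hs
  refine hs.congr_fun fun n => ?_
  rw [PowerSeries.coeff_mul, Finset.sum_mul]
  refine Finset.sum_congr rfl fun x hx => ?_
  rw [Finset.HasAntidiagonal.mem_antidiagonal] at hx
  rw [← hx, pow_add]; ring

lemma HasS.sub {F G : ℂ → ℂ} {d e} (h : HasS F d) (h' : HasS G e) :
    HasS (fun q => F q - G q) (d - e) := by
  intro q hq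
  refine ((h q hq).sub (h' q hq)).congr_fun fun n => ?_
  simp [sub_mul]

lemma HasS.const (c : ℂ) : HasS (fun _ => c) (PowerSeries.C c) := by
  intro q hq
  convert hasSum_ite_eq (0 : ℕ) c using 1
  ext n; rw [PowerSeries.coeff_C]; split_ifs with h <;> simp [h]

lemma HasS.id : HasS (fun q => q) PowerSeries.X := by
  intro q hq
  convert hasSum_ite_eq (1 : ℕ) q using 1
  ext n; rw [PowerSeries.coeff_X]; split_ifs with h <;> simp [h]

lemma RatS.congr {F G : ℂ → ℂ} (h : RatS F) (e : ∀ q : ℂ, ‖q‖ < 1 → G q = F q) : RatS G := by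
  obtain ⟨s, hs⟩ := h; exact ⟨s, hs.congr e⟩

lemma RatS.diff {F : ℂ → ℂ} (h : RatS F) : DifferentiableOn ℂ F (Metric.ball 0 1) := by
  obtain ⟨s, hs⟩ := h; exact hs.diff

lemma RatS.mul {F G : ℂ → ℂ} (h : RatS F) (h' : RatS G) : RatS (fun q => F q * G q) := by
  obtain ⟨s, hs⟩ := h; obtain ⟨t, ht⟩ := h'
  exact ⟨s * t, by rw [map_mul]; exact hs.mul ht⟩

lemma RatS.sub {F G : ℂ → ℂ} (h : RatS F) (h' : RatS G) : RatS (fun q => F q - G q) := by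
  obtain ⟨s, hs⟩ := h; obtain ⟨t, ht⟩ := h'
  exact ⟨s - t, by rw [map_sub]; exact hs.sub ht⟩

lemma RatS.const (c : ℚ) : RatS (fun _ => (c : ℂ)) :=
  ⟨PowerSeries.C c, by simpa using HasS.const (c : ℂ)⟩

lemma RatS.id : RatS (fun q => q) := ⟨PowerSeries.X, by simpa using HasS.id⟩

lemma RatS.pow {F : ℂ → ℂ} (h : RatS F) (k : ℕ) : RatS (fun q => F q ^ k) := by
  induction k with
  | zero => simpa using RatS.const 1
  | succ k ih => simpa [pow_succ] using ih.mul h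

lemma RatS.inv {F : ℂ → ℂ} (h : RatS F) (h0 : ∀ q : ℂ, ‖q‖ < 1 → F q ≠ 0) :
    RatS (fun q => (F q)⁻¹) := by
  have hd : DifferentiableOn ℂ (fun q => (F q)⁻¹) (Metric.ball 0 1) :=
    h.diff.inv fun q hq => h0 q (by simpa using hq)
  obtain ⟨s, hs⟩ := h
  have hi := hasS_of_diff hd
  set d : PowerSeries ℂ := PowerSeries.mk fun n => (n.factorial : ℂ)⁻¹ * iteratedDeriv n (fun q => (F q)⁻¹) 0
  have h1 : HasS (fun _ => (1 : ℂ)) (s.map (algebraMap ℚ ℂ) * d) :=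
    (hs.mul hi).congr fun q hq => by rw [mul_inv_cancel₀ (h0 q hq)]
  have h2 : s.map (algebraMap ℚ ℂ) * d = 1 := by
    have := h1.unique (HasS.const 1); simpa using this
  have hs0 : s.constantCoeff ≠ 0 := by
    intro hz
    have := congrArg (PowerSeries.coeff 0) h2
    rw [PowerSeries.coeff_mul] at this
    simp [hz] at this
  refine ⟨s⁻¹, ?_⟩
  have : s.map (algebraMap ℚ ℂ) * (s⁻¹).map (algebraMap ℚ ℂ) = 1 := by
    rw [← map_mul, PowerSeries.mul_inv_cancel _ hs0, map_one]
  have e : d = (s⁻¹).map (algebraMap ℚ ℂ) := by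
    calc d = d * (s.map (algebraMap ℚ ℂ) * (s⁻¹).map (algebraMap ℚ ℂ)) := by rw [this, mul_one]
      _ = (s.map (algebraMap ℚ ℂ) * d) * (s⁻¹).map (algebraMap ℚ ℂ) := by ring
      _ = _ := by rw [h2, one_mul]
  rw [← e]; exact hi

lemma RatS.comp_pow {F : ℂ → ℂ} (h : RatS F) (k : ℕ) (hk : k ≠ 0) : RatS (fun q => F (q ^ k)) := by
  obtain ⟨s, hs⟩ := h
  refine ⟨PowerSeries.mk fun n => if k ∣ n then s.coeff (n / k) else 0, ?_⟩
  intro q hq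
  have := hs (q ^ k) (norm_pow_lt hq k hk)
  have hinj : Function.Injective fun n : ℕ => k * n := fun a b hab => by
    simpa [hk] using hab
  rw [← hinj.hasSum_iff]
  · convert this using 1
    ext n
    simp [pow_mul, Nat.mul_div_cancel_left _ (Nat.pos_of_ne_zero hk)]
  · intro n hn
    have : ¬ k ∣ n := fun ⟨m, hm⟩ => hn ⟨m, hm.symm⟩
    simp [this]

/-- removing a zero constant term -/
lemma RatS.divX {F : ℂ → ℂ} (h : RatS F) (h0 : F 0 = 0) :
    ∃ G, RatS G ∧ ∀ q : ℂ, ‖q‖ < 1 → F q = q * G q := by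
  obtain ⟨s, hs⟩ := h
  have hc : (s.map (algebraMap ℚ ℂ)).coeff 0 = 0 := by
    have h1 := hs 0 (by simp)
    have h2 := hasSum_single (f := fun n : ℕ => (s.map (algebraMap ℚ ℂ)).coeff n * (0 : ℂ) ^ n) 0 (by
      intro n hn; simp [hn])
    have := h1.unique h2
    rw [h0] at this; simpa using this.symm
  have key : ∀ q : ℂ, ‖q‖ < 1 → q ≠ 0 → HasSum (fun n : ℕ => (s.map (algebraMap ℚ ℂ)).coeff (n+1) * q ^ n) (F q / q) := by
    intro q hq hq0
    have h1 := hs q hq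
    rw [← hasSum_nat_add_iff' 1] at h1
    simp only [Finset.sum_range_one, hc, zero_mul, sub_zero] at h1
    have h2 := h1.div_const q
    refine h2.congr_fun fun n => ?_
    rw [pow_succ]; field_simp
  refine ⟨fun q => ∑' n : ℕ, (s.map (algebraMap ℚ ℂ)).coeff (n+1) * q ^ n,
    ⟨PowerSeries.mk fun n => s.coeff (n + 1), ?_⟩, ?_⟩
  · intro q hq
    have hsum : Summable (fun n : ℕ => (s.map (algebraMap ℚ ℂ)).coeff (n+1) * q ^ n) := by
      by_cases hq0 : q = 0
      · subst hq0
        exact (hasSum_single 0 (by intro n hn; simp [hn])).summable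
      · exact (key q hq hq0).summable
    simpa using hsum.hasSum
  · intro q hq
    by_cases hq0 : q = 0
    · subst hq0; simp [h0]
    · simp only
      rw [(key q hq hq0).tsum_eq]; field_simp

/-- integer polynomial functions -/
def IntPoly (f : ℂ → ℂ) : Prop := ∃ p : Polynomial ℤ, ∀ x, f x = Polynomial.aeval x p

lemma IntPoly.deriv {f : ℂ → ℂ} (h : IntPoly f) : IntPoly (deriv f) := by
  obtain ⟨p, hp⟩ := h
  refine ⟨Polynomial.derivative p, fun x => ?_⟩
  rw [funext hp, Polynomial.deriv_aeval]

lemma IntPoly.differentiable {f : ℂ → ℂ} (h : IntPoly f) : Differentiable ℂ f := by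
  obtain ⟨p, hp⟩ := h
  rw [funext hp]; exact Polynomial.differentiable_aeval p

lemma IntPoly.iter {f : ℂ → ℂ} (h : IntPoly f) (n : ℕ) : IntPoly (iteratedDeriv n f) := by
  induction n with
  | zero => simpa using h
  | succ n ih => rw [iteratedDeriv_succ]; exact ih.deriv

lemma intPoly_prod (s : Finset ℕ) : IntPoly (fun q => ∏ i ∈ s, (1 - q ^ (i + 1))) :=
  ⟨∏ i ∈ s, (1 - Polynomial.X ^ (i + 1)), fun x => by simp⟩

open Filter Topology in
lemma PP_iter (n : ℕ) : TendstoLocallyUniformlyOn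
    (fun s : Finset ℕ => iteratedDeriv n (fun q : ℂ => ∏ i ∈ s, (1 - q ^ (i + 1)))) (iteratedDeriv n PP) atTop
    (Metric.ball (0 : ℂ) 1) := by
  induction n with
  | zero =>
    have := ModularForm.multipliableLocallyUniformlyOn_one_sub_pow.hasProdLocallyUniformlyOn
    have hPP : PP = fun x => ∏' (i : ℕ), (1 - x ^ (i + 1)) := rfl
    simp only [iteratedDeriv_zero]
    rw [hPP]
    simpa [HasProdLocallyUniformlyOn] using this
  | succ n ih =>
    simp_rw [iteratedDeriv_succ]
    exact ih.deriv (.of_forall fun s => ((intPoly_prod s).iter n).differentiable.differentiableOn)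
      Metric.isOpen_ball

open Filter Topology in
lemma PP_int (n : ℕ) : ∃ k : ℤ, iteratedDeriv n PP 0 = k := by
  have h := (PP_iter n).tendsto_at (Metric.mem_ball_self (x := (0:ℂ)) one_pos)
  have := Complex.isClosed_range_intCast.mem_of_tendsto h (.of_forall fun s => by
    obtain ⟨p, hp⟩ := (intPoly_prod s).iter n
    rw [hp]
    refine ⟨p.coeff 0, ?_⟩
    rw [Polynomial.aeval_def, Polynomial.eval₂_at_zero]; simp)
  obtain ⟨k, hk⟩ := this
  exact ⟨k, hk.symm⟩

lemma PP_rat : RatS PP := by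
  choose k hk using PP_int
  refine ⟨PowerSeries.mk fun n => (n.factorial : ℚ)⁻¹ * k n, ?_⟩
  convert hasS_of_diff PP_diff using 1
  ext n
  simp [hk]

lemma AA_rat : RatS AA := by
  unfold AA
  refine (((PP_rat.comp_pow 2 (by simp)).pow 24).mul ((PP_rat.pow 8).inv ?_)).mul
    (((PP_rat.comp_pow 4 (by simp)).pow 16).inv ?_)
  · intro q hq; exact pow_ne_zero _ (PP_ne_zero hq)
  · intro q hq; exact pow_ne_zero _ (PP_ne_zero (norm_pow_lt hq 4 (by simp)))

lemma BB_rat : RatS BB := by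
  unfold BB
  refine (PP_rat.pow 8).mul (((PP_rat.comp_pow 4 (by simp)).pow 8).inv ?_)
  · intro q hq; exact pow_ne_zero _ (PP_ne_zero (norm_pow_lt hq 4 (by simp)))

lemma inv_of_low {h : ℍ → ℂ} (hinv : ∀ γ ∈ Gamma1 4, ∀ τ : ℍ, h (γ • τ) = h τ)
    (δ : SL(2, ℤ)) (hδ : (4:ℤ) ∣ δ 1 0) (τ : ℍ) : h (δ • τ) = h τ := by
  have hdet := δ.det_coe
  rw [Matrix.det_fin_two] at hdet
  obtain ⟨m, hm⟩ := hδ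
  have h1 : ((δ 0 0 : ℤ) : ZMod 4) * ((δ 1 1 : ℤ) : ZMod 4) = 1 := by
    have := congrArg (Int.cast : ℤ → ZMod 4) hdet
    rw [hm] at this
    push_cast at this
    have h4 : (4 : ZMod 4) = 0 := by decide
    rw [h4] at this
    simpa using this
  have h10 : ((δ 1 0 : ℤ) : ZMod 4) = 0 := by
    rw [hm]; push_cast
    have h4 : (4 : ZMod 4) = 0 := by decide
    rw [h4, zero_mul]
  have key : ∀ a d : ZMod 4, a * d = 1 → (a = 1 ∧ d = 1) ∨ (-a = 1 ∧ -d = 1) := by decide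
  rcases key _ _ h1 with ⟨ha, hd⟩ | ⟨ha, hd⟩
  · exact hinv δ (by rw [Gamma1_mem]; exact ⟨ha, hd, h10⟩) τ
  · have := hinv (-δ) (by rw [Gamma1_mem]; simp [ha, hd, h10]) τ
    rwa [ModularGroup.SL_neg_smul] at this

lemma VV_inv_entries : (VV⁻¹ : SL(2, ℤ)) 0 0 = 1 ∧ (VV⁻¹ : SL(2, ℤ)) 1 0 = -2 := by
  rw [Matrix.SpecialLinearGroup.SL2_inv_expl]
  simp [VV]

lemma S_inv_entries : (ModularGroup.S⁻¹ : SL(2, ℤ)) 0 0 = 0 ∧ (ModularGroup.S⁻¹ : SL(2, ℤ)) 1 0 = -1 := by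
  rw [Matrix.SpecialLinearGroup.SL2_inv_expl]
  simp [ModularGroup.S]

lemma cosets {h : ℍ → ℂ} (hinv : ∀ γ ∈ Gamma1 4, ∀ τ : ℍ, h (γ • τ) = h τ) (γ : SL(2, ℤ)) :
    (∀ τ, h (γ • τ) = h τ) ∨ (∀ τ, h (γ • τ) = h (VV • τ)) ∨
    (∃ k : ℤ, ∀ τ, h (γ • τ) = h (ModularGroup.S • (ModularGroup.T ^ k • τ))) := by
  have hdet := γ.det_coe
  rw [Matrix.det_fin_two] at hdet
  rcases Int.even_or_odd (γ 1 0) with ⟨m, hm⟩ | ⟨m, hm⟩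
  · rcases Int.even_or_odd m with ⟨l, hl⟩ | ⟨l, hl⟩
    · left
      exact fun τ => inv_of_low hinv γ ⟨l, by omega⟩ τ
    · right; left
      intro τ
      have hd : Odd (γ 1 1) := by
        by_contra hcon
        rw [Int.not_odd_iff_even] at hcon
        obtain ⟨e, he⟩ := hcon
        rw [hm, he] at hdet
        have : 2 * (γ 0 0 * e - γ 0 1 * m) = 1 := by linarith
        omega
      obtain ⟨e, he⟩ := hd
      have : γ = (γ * VV⁻¹) * VV := by group
      rw [this, mul_smul]
      refine inv_of_low hinv _ ?_ _
      simp only [Matrix.SpecialLinearGroup.coe_mul, Matrix.mul_apply, Fin.sum_univ_two, hm, he, hl,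
        VV_inv_entries.1, VV_inv_entries.2]
      omega
  · right; right
    refine ⟨γ 1 1 * γ 1 0, fun τ => ?_⟩
    generalize hk : γ 1 1 * γ 1 0 = k
    have : γ = (γ * (ModularGroup.T ^ (-k)) * ModularGroup.S⁻¹) * (ModularGroup.S * ModularGroup.T ^ k) := by group
    nth_rw 1 [this]
    rw [mul_smul _ _ τ, mul_smul _ _ τ]
    refine inv_of_low hinv _ ?_ _
    have e : (γ * (ModularGroup.T ^ (-k)) * ModularGroup.S⁻¹) 1 0 = γ 1 0 * k - γ 1 1 := by
      simp only [Matrix.SpecialLinearGroup.coe_mul, ModularGroup.coe_T_zpow, Matrix.mul_apply, Fin.sum_univ_two,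
        S_inv_entries.1, S_inv_entries.2]
      simp; ring
    rw [e, ← hk, hm]
    refine ⟨γ 1 1 * (m^2+m), by ring⟩

lemma qpow_zpow (d : ℕ) (n : ℤ) (τ : ℍ) : qpow d n τ = qpow d 1 τ ^ n := by
  unfold qpow
  rw [← Complex.exp_int_mul]
  congr 1
  push_cast
  ring

lemma qpow_ne (d : ℕ) (n : ℤ) (τ : ℍ) : qpow d n τ ≠ 0 := Complex.exp_ne_zero _

lemma qpow_norm (d : ℕ) (hd : d ≠ 0) (τ : ℍ) : ‖qpow d 1 τ‖ < 1 := by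
  have hd' : (0:ℝ) < d := by positivity
  have := norm_exp_lt (τ : ℂ) τ.2 ((d:ℝ)⁻¹) (by positivity)
  unfold qpow
  convert this using 3
  push_cast
  ring

lemma qpow_surj (d : ℕ) (hd : d ≠ 0) (x : ℂ) (hx : x ≠ 0) (hx1 : ‖x‖ < 1) : ∃ τ : ℍ, qpow d 1 τ = x := by
  have hd' : (0:ℝ) < d := by positivity
  refine ⟨⟨Function.Periodic.invQParam d x, Function.Periodic.im_invQParam_pos_of_norm_lt_one hd' hx1 hx⟩, ?_⟩
  have := Function.Periodic.qParam_right_inv hd'.ne' hx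
  refine Eq.trans ?_ this
  unfold qpow Function.Periodic.qParam
  congr 1
  push_cast
  ring

lemma expand_of {d : ℕ} (hd : d ≠ 0) {F : ℍ → ℂ} {Φ : ℂ → ℂ} {c : ℕ → ℂ} {n₀ : ℤ}
    (hΦ : HasS Φ (PowerSeries.mk c))
    (hF : ∀ τ, F τ = qpow d 1 τ ^ n₀ * Φ (qpow d 1 τ)) (τ : ℍ) :
    HasSum (fun n : ℕ => c n * qpow d (n₀ + n) τ) (F τ) := by
  rw [hF]
  refine ((hΦ _ (qpow_norm d hd τ)).mul_left (qpow d 1 τ ^ n₀)).congr_fun fun n => ?_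
  rw [qpow_zpow, zpow_add₀ (qpow_ne _ _ _), zpow_natCast, PowerSeries.coeff_mk]
  ring

lemma expand_to {d : ℕ} (hd : d ≠ 0) {F : ℍ → ℂ} {c : ℕ → ℂ} {n₀ : ℤ}
    (h : ∀ τ, HasSum (fun n : ℕ => c n * qpow d (n₀ + n) τ) (F τ)) :
    HasS (fun x => ∑' n : ℕ, c n * x ^ n) (PowerSeries.mk c) ∧
    ∀ τ, F τ = qpow d 1 τ ^ n₀ * ∑' n : ℕ, c n * (qpow d 1 τ) ^ n := by
  have key : ∀ τ, HasSum (fun n : ℕ => c n * qpow d 1 τ ^ n) ((qpow d 1 τ ^ n₀)⁻¹ * F τ) := by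
    intro τ
    refine ((h τ).mul_left _).congr_fun fun n => ?_
    have h0 := zpow_ne_zero n₀ (qpow_ne d 1 τ)
    rw [qpow_zpow d (n₀ + n), zpow_add₀ (qpow_ne _ _ _), zpow_natCast]
    field_simp
  constructor
  · intro x hx
    simp only [PowerSeries.coeff_mk]
    by_cases h0 : x = 0
    · subst h0
      refine Summable.hasSum (summable_of_ne_finset_zero (s := {0}) fun n hn => ?_)
      have : n ≠ 0 := by simpa using hn
      simp [this]
    · obtain ⟨τ, rfl⟩ := qpow_surj d hd x h0 hx
      exact (key τ).summable.hasSum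
  · intro τ
    rw [(key τ).tsum_eq]
    have h0 := zpow_ne_zero n₀ (qpow_ne d 1 τ)
    field_simp

/-- Meromorphic at the cusp `i∞` in the parameter `q^{1/4}`. -/
def Mer (F : ℍ → ℂ) : Prop := ∃ k : ℤ, ∃ Φ : ℂ → ℂ, DifferentiableOn ℂ Φ (Metric.ball 0 1) ∧
  ∀ τ, F τ = qpow 4 1 τ ^ k * Φ (qpow 4 1 τ)

/-- Meromorphic at the cusp `i∞` in the parameter `q`, with rational coefficients. -/
def RMer (F : ℍ → ℂ) : Prop := ∃ k : ℤ, ∃ Φ : ℂ → ℂ, RatS Φ ∧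
  ∀ τ, F τ = qpow 1 1 τ ^ k * Φ (qpow 1 1 τ)

lemma mer_iff (F : ℍ → ℂ) : Mer F ↔ ∃ n₀ : ℤ, ∃ c : ℕ → ℂ,
    ∀ τ : ℍ, HasSum (fun n : ℕ => c n * qpow 4 (n₀ + n) τ) (F τ) := by
  constructor
  · rintro ⟨k, Φ, hΦ, h⟩
    exact ⟨k, _, expand_of (by simp) (hasS_of_diff hΦ) h⟩
  · rintro ⟨n₀, c, h⟩
    obtain ⟨h1, h2⟩ := expand_to (by simp) h
    exact ⟨n₀, _, h1.diff, h2⟩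

lemma rmer_iff (F : ℍ → ℂ) : RMer F ↔ ∃ n₀ : ℤ, ∃ c : ℕ → ℚ,
    ∀ τ : ℍ, HasSum (fun n : ℕ => (c n : ℂ) * qpow 1 (n₀ + n) τ) (F τ) := by
  constructor
  · rintro ⟨k, Φ, ⟨s, hs⟩, h⟩
    refine ⟨k, fun n => s.coeff n, expand_of (by simp) ?_ h⟩
    convert hs using 1
    ext n; simp
  · rintro ⟨n₀, c, h⟩
    obtain ⟨h1, h2⟩ := expand_to (by simp) h
    refine ⟨n₀, fun x => ∑' n : ℕ, (c n : ℂ) * x ^ n, ⟨PowerSeries.mk c, ?_⟩, h2⟩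
    convert h1 using 1
    ext n; simp

lemma qpow_one_four (τ : ℍ) : qpow 1 1 τ = qpow 4 1 τ ^ 4 := by
  unfold qpow
  rw [← Complex.exp_nat_mul]
  congr 1
  push_cast
  ring

lemma RMer.mer {F : ℍ → ℂ} (h : RMer F) : Mer F := by
  obtain ⟨k, Φ, hΦ, h⟩ := h
  refine ⟨4 * k, _, (hΦ.comp_pow 4 (by simp)).diff, fun τ => ?_⟩
  rw [h, qpow_one_four, _root_.zpow_mul]
  rfl

lemma Mer.shift {F : ℍ → ℂ} (h : Mer F) (k : ℤ) : Mer (fun τ => F (ModularGroup.T ^ k • τ)) := by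
  obtain ⟨n, Φ, hΦ, h⟩ := h
  set ζ : ℂ := cexp ((2 * π * (k/4) : ℝ) * Complex.I)
  have hζ : ‖ζ‖ = 1 := Complex.norm_exp_ofReal_mul_I _
  have hq : ∀ τ, qpow 4 1 (ModularGroup.T ^ k • τ) = ζ * qpow 4 1 τ := by
    intro τ
    unfold qpow
    rw [ModularGroup.coe_T_zpow_smul_eq, ← Complex.exp_add]
    congr 1
    push_cast
    ring
  refine ⟨n, fun x => ζ ^ n * Φ (ζ * x), ?_, fun τ => ?_⟩
  · refine (hΦ.comp ((differentiable_id.const_mul ζ).differentiableOn) ?_).const_mul _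
    intro x hx
    simpa [hζ] using hx
  · simp only
    rw [h, hq, mul_zpow]
    ring

lemma holo_iff (h : ℍ → ℂ) : IsWeaklyHolo1 4 h ↔ MDifferentiable 𝓘(ℂ) 𝓘(ℂ) h ∧
    (∀ γ ∈ Gamma1 4, ∀ τ : ℍ, h (γ • τ) = h τ) ∧ RMer h ∧ Mer (fun τ => h (VV • τ)) ∧
    Mer (fun τ => h (ModularGroup.S • τ)) := by
  unfold IsWeaklyHolo1
  rw [← rmer_iff]
  constructor
  · rintro ⟨h1, h2, h3, h4⟩
    exact ⟨h1, h2, h3, (mer_iff _).2 (h4 _), (mer_iff _).2 (h4 _)⟩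
  · rintro ⟨h1, h2, h3, h4, h5⟩
    refine ⟨h1, h2, h3, fun γ => ?_⟩
    rw [← mer_iff]
    rcases cosets h2 γ with e | e | ⟨k, e⟩
    · simp only [e]; exact h3.mer
    · simp only [e]; exact h4
    · simp only [e]; exact h5.shift k

lemma qpow_one_eq (τ : ℍ) : qpow 1 1 τ = cexp (2 * π * Complex.I * τ) := by
  unfold qpow; simp

lemma qpow_four_eq (τ : ℍ) : qpow 4 1 τ = cexp (2 * π * Complex.I * τ / 4) := by
  unfold qpow
  congr 1
  push_cast
  ring

lemma g_inf (τ : ℍ) : gOne4 τ = (qpow 1 1 τ)⁻¹ * AA (qpow 1 1 τ) := gOne4_eq τ _ (qpow_one_eq τ)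
lemma g16_inf (τ : ℍ) : gOne4 τ - 16 = (qpow 1 1 τ)⁻¹ * BB (qpow 1 1 τ) :=
  gOne4_16_eq τ _ (qpow_one_eq τ)
lemma g_S (τ : ℍ) : gOne4 (ModularGroup.S • τ) = 16 * AA (qpow 4 1 τ) / BB (qpow 4 1 τ) :=
  gOne4_SS τ _ (qpow_four_eq τ)
lemma g16_S (τ : ℍ) : gOne4 (ModularGroup.S • τ) - 16 = 256 * qpow 4 1 τ / BB (qpow 4 1 τ) :=
  gOne4_SS16 τ _ (qpow_four_eq τ)

lemma g_V (τ : ℍ) : gOne4 (VV • τ) = 256 * qpow 1 1 τ / AA (qpow 1 1 τ) := by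
  rw [gOne4_VV, g_inf]
  have h1 := qpow_ne 1 1 τ
  have h2 := AA_ne_zero (qpow_norm 1 one_ne_zero τ)
  field_simp

lemma g16_V (τ : ℍ) : gOne4 (VV • τ) - 16 = -16 * BB (qpow 1 1 τ) / AA (qpow 1 1 τ) := by
  rw [g_V, ← AA_sub (qpow_norm 1 one_ne_zero τ)]
  have h2 := AA_ne_zero (qpow_norm 1 one_ne_zero τ)
  field_simp
  ring

lemma AAi_rat : RatS (fun q => (AA q)⁻¹) := AA_rat.inv fun _ h => AA_ne_zero h
lemma BBi_rat : RatS (fun q => (BB q)⁻¹) := BB_rat.inv fun _ h => BB_ne_zero h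

lemma g_holo : IsWeaklyHolo1 4 gOne4 := by
  rw [holo_iff]
  refine ⟨gOne4_mdiff, gOne4_gamma1, ⟨-1, _, AA_rat, fun τ => ?_⟩, RMer.mer
    ⟨1, _, (RatS.const 256).mul AAi_rat, fun τ => ?_⟩, ⟨0, _, AA_rat.diff.mul
      (BBi_rat.diff.const_mul 16), fun τ => ?_⟩⟩
  · rw [g_inf, _root_.zpow_neg_one]
  · simp only [g_V]; simp; ring
  · simp only [g_S]; simp; ring

lemma mdiff_inv {f : ℍ → ℂ} (hf : MDifferentiable 𝓘(ℂ) 𝓘(ℂ) f) (h0 : ∀ τ, f τ ≠ 0) :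
    MDifferentiable 𝓘(ℂ) 𝓘(ℂ) (fun τ => (f τ)⁻¹) := by
  rw [UpperHalfPlane.mdifferentiable_iff] at *
  exact hf.inv fun z hz => h0 _

lemma gi_holo : IsWeaklyHolo1 4 (fun τ => (gOne4 τ)⁻¹) := by
  rw [holo_iff]
  refine ⟨mdiff_inv gOne4_mdiff gOne4_ne, fun γ hγ τ => by rw [gOne4_gamma1 γ hγ],
    ⟨1, _, AAi_rat, fun τ => ?_⟩, RMer.mer
    ⟨-1, _, (RatS.const (1/256)).mul AA_rat, fun τ => ?_⟩, ⟨0, _, BB_rat.diff.mul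
      (AAi_rat.diff.const_mul (1/16)), fun τ => ?_⟩⟩
  · simp only [g_inf]; simp [mul_comm]
  · simp only [g_V]; simp; ring
  · simp only [g_S]; simp; ring

lemma g16i_holo : IsWeaklyHolo1 4 (fun τ => (gOne4 τ - 16)⁻¹) := by
  rw [holo_iff]
  refine ⟨mdiff_inv (gOne4_mdiff.sub mdifferentiable_const) gOne4_16_ne,
    fun γ hγ τ => by rw [gOne4_gamma1 γ hγ],
    ⟨1, _, BBi_rat, fun τ => ?_⟩, RMer.mer
    ⟨0, _, (RatS.const (-1/16)).mul (AA_rat.mul BBi_rat), fun τ => ?_⟩, ⟨-1, _, 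
      (BB_rat.diff.const_mul (1/256)), fun τ => ?_⟩⟩
  · simp only [g16_inf]; simp [mul_comm]
  · simp only [g16_V]; simp; ring
  · simp only [g16_S]; simp; ring

/-- Holomorphic at the cusp `i∞` in the parameter `q^{1/4}`. -/
def Bd (F : ℍ → ℂ) : Prop := ∃ Φ : ℂ → ℂ, DifferentiableOn ℂ Φ (Metric.ball 0 1) ∧
  ∀ τ, F τ = Φ (qpow 4 1 τ)

open Filter Topology in
lemma qpow_tendsto (d : ℕ) (hd : d ≠ 0) : Tendsto (fun τ : ℍ => qpow d 1 τ) atImInfty (𝓝 0) := by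
  have hd' : (0:ℝ) < d := by positivity
  have := UpperHalfPlane.qParam_tendsto_atImInfty hd'
  refine this.congr fun τ => ?_
  unfold qpow Function.Periodic.qParam
  congr 1
  push_cast
  ring

open Filter Topology in
lemma Bd.bounded {F : ℍ → ℂ} (h : Bd F) : IsBoundedAtImInfty F := by
  obtain ⟨Φ, hΦ, h⟩ := h
  have hc : ContinuousAt Φ 0 :=
    (hΦ.differentiableAt (Metric.isOpen_ball.mem_nhds (by simp))).continuousAt
  have := hc.tendsto.comp (qpow_tendsto 4 (by simp))
  have h2 : Tendsto F atImInfty (𝓝 (Φ 0)) := this.congr fun τ => (h τ).symm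
  exact h2.isBigO_one ℝ

lemma Bd.sub {F G : ℍ → ℂ} (h : Bd F) (h' : Bd G) : Bd (fun τ => F τ - G τ) := by
  obtain ⟨Φ, hΦ, h⟩ := h
  obtain ⟨Ψ, hΨ, h'⟩ := h'
  exact ⟨fun x => Φ x - Ψ x, hΦ.sub hΨ, fun τ => by simp only [h, h']⟩

lemma Bd.poly {F : ℍ → ℂ} (h : Bd F) (p : Polynomial ℚ) :
    Bd (fun τ => Polynomial.aeval (F τ) p) := by
  obtain ⟨Φ, hΦ, h⟩ := h
  refine ⟨fun x => Polynomial.aeval (Φ x) p, ?_, fun τ => by simp only [h]⟩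
  have : Differentiable ℂ (fun x : ℂ => Polynomial.aeval x p) := by
    have := (p.map (algebraMap ℚ ℂ)).differentiable
    simpa [Polynomial.eval_map_algebraMap] using this
  exact this.comp_differentiableOn hΦ

lemma Bd.shift {F : ℍ → ℂ} (h : Bd F) (k : ℤ) : Bd (fun τ => F (ModularGroup.T ^ k • τ)) := by
  obtain ⟨Φ, hΦ, h⟩ := h
  set ζ : ℂ := cexp ((2 * π * (k/4) : ℝ) * Complex.I)
  have hζ : ‖ζ‖ = 1 := Complex.norm_exp_ofReal_mul_I _
  have hq : ∀ τ, qpow 4 1 (ModularGroup.T ^ k • τ) = ζ * qpow 4 1 τ := by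
    intro τ
    unfold qpow
    rw [ModularGroup.coe_T_zpow_smul_eq, ← Complex.exp_add]
    congr 1
    push_cast
    ring
  refine ⟨fun x => Φ (ζ * x), ?_, fun τ => ?_⟩
  · refine (hΦ.comp ((differentiable_id.const_mul ζ).differentiableOn) ?_)
    intro x hx
    simpa [hζ] using hx
  · simp only
    rw [h, hq]

lemma Mer.kill {F G : ℍ → ℂ} (h : Mer F) {W : ℂ → ℂ} (hW : DifferentiableOn ℂ W (Metric.ball 0 1))
    (hG : ∀ τ, G τ = qpow 4 1 τ * W (qpow 4 1 τ)) :
    ∃ M₀ : ℕ, ∀ M ≥ M₀, Bd (fun τ => F τ * G τ ^ M) := by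
  obtain ⟨k, Φ, hΦ, h⟩ := h
  refine ⟨(-k).toNat, fun M hM => ?_⟩
  obtain ⟨j, hj⟩ : ∃ j : ℕ, k + M = j := ⟨(k + M).toNat, by omega⟩
  refine ⟨fun x => x ^ j * (Φ x * W x ^ M), ?_, fun τ => ?_⟩
  · exact (differentiable_id.pow j).differentiableOn.mul (hΦ.mul (hW.pow M))
  · simp only
    rw [h, hG, ← zpow_natCast _ j, ← hj, zpow_add₀ (qpow_ne _ _ _), mul_pow, zpow_natCast]
    ring

lemma RatS.val0 {F : ℂ → ℂ} (h : RatS F) : ∃ r : ℚ, F 0 = r := by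
  obtain ⟨s, hs⟩ := h
  refine ⟨s.coeff 0, ?_⟩
  have h1 := hs 0 (by simp)
  have h2 := hasSum_single (f := fun n => (s.map (algebraMap ℚ ℂ)).coeff n * (0:ℂ) ^ n) 0
    (fun n hn => by simp [hn])
  rw [h1.unique h2]
  simp

lemma polar (m : ℕ) : ∀ (H : ℍ → ℂ) (Ψ : ℂ → ℂ), RatS Ψ →
    (∀ τ, H τ = (qpow 1 1 τ ^ m)⁻¹ * Ψ (qpow 1 1 τ)) →
    ∃ p : Polynomial ℚ, ∃ Θ : ℂ → ℂ, RatS Θ ∧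
      ∀ τ, H τ - Polynomial.aeval (gOne4 τ) p = qpow 1 1 τ * Θ (qpow 1 1 τ) := by
  have step : ∀ m (H : ℍ → ℂ) (Ψ : ℂ → ℂ), RatS Ψ →
    (∀ τ, H τ = (qpow 1 1 τ ^ m)⁻¹ * Ψ (qpow 1 1 τ)) → ∃ r : ℚ, ∃ Θ, RatS Θ ∧
     ∀ τ, H τ - r * gOne4 τ ^ m = (qpow 1 1 τ ^ m)⁻¹ * (qpow 1 1 τ * Θ (qpow 1 1 τ)) := by
    intro m H Ψ hΨ hH
    obtain ⟨r, hr⟩ := hΨ.val0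
    obtain ⟨Θ, hΘ, e⟩ := (hΨ.sub ((RatS.const r).mul (AA_rat.pow m))).divX (by
      simp [hr, AA_zero])
    refine ⟨r, Θ, hΘ, fun τ => ?_⟩
    rw [← e _ (qpow_norm 1 one_ne_zero τ), hH, g_inf, mul_pow, inv_pow]
    ring
  induction m with
  | zero =>
    intro H Ψ hΨ hH
    obtain ⟨r, Θ, hΘ, e⟩ := step 0 H Ψ hΨ hH
    exact ⟨Polynomial.C r, Θ, hΘ, fun τ => by simpa using e τ⟩
  | succ m ih =>
    intro H Ψ hΨ hH
    obtain ⟨r, Θ, hΘ, e⟩ := step (m+1) H Ψ hΨ hH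
    obtain ⟨p, Θ', hΘ', e'⟩ := ih _ Θ hΘ (fun τ => (e τ).trans (by
      have := qpow_ne 1 1 τ
      field_simp
      ring))
    refine ⟨Polynomial.C r * Polynomial.X ^ (m+1) + p, Θ', hΘ', fun τ => ?_⟩
    rw [← e' τ]
    simp
    ring

lemma g_V_Bd : Bd (fun τ => gOne4 (VV • τ)) := by
  refine ⟨_, (((RatS.const 256).mul (RatS.id.mul AAi_rat)).comp_pow 4 (by simp)).diff, fun τ => ?_⟩
  simp only [g_V, qpow_one_four]; simp; ring

lemma g_S_Bd : Bd (fun τ => gOne4 (ModularGroup.S • τ)) := by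
  refine ⟨_, ((RatS.const 16).mul (AA_rat.mul BBi_rat)).diff, fun τ => ?_⟩
  simp only [g_S]; simp; ring

open Filter Topology in
lemma converse (h : ℍ → ℂ) (hh : IsWeaklyHolo1 4 h) : ∃ P : MvPolynomial (Fin 3) ℚ, ∀ τ : ℍ,
        h τ = MvPolynomial.aeval ![gOne4 τ, (gOne4 τ)⁻¹, (gOne4 τ - 16)⁻¹] P := by
  rw [holo_iff] at hh
  obtain ⟨hd, hinv, ⟨k, Φ, hΦ, hinf⟩, hV, hS⟩ := hh
  obtain ⟨M₁, h1⟩ := hV.kill (G := fun τ => gOne4 (VV • τ) * (gOne4 (VV • τ) - 16))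
    (W := fun x => x ^ 3 * ((-4096) * BB (x^4) * (AA (x^4))⁻¹ * (AA (x^4))⁻¹)) (by
      exact (differentiable_id.pow 3).differentiableOn.mul
        ((((BB_rat.comp_pow 4 (by simp)).diff.const_mul _).mul
          (AAi_rat.comp_pow 4 (by simp)).diff).mul (AAi_rat.comp_pow 4 (by simp)).diff))
    (fun τ => by simp only [g16_V]; simp only [g_V, qpow_one_four]; ring)
  obtain ⟨M₂, h2⟩ := hS.kill (G := fun τ => gOne4 (ModularGroup.S • τ) * (gOne4 (ModularGroup.S • τ) - 16))
    (W := fun x => 4096 * AA x * (BB x)⁻¹ * (BB x)⁻¹)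
    (((AA_diff.const_mul _).mul BBi_rat.diff).mul BBi_rat.diff)
    (fun τ => by simp only [g16_S]; simp only [g_S]; ring)
  set M := max M₁ M₂
  replace h1 := h1 M (le_max_left _ _)
  replace h2 := h2 M (le_max_right _ _)
  set H : ℍ → ℂ := fun τ => h τ * (gOne4 τ * (gOne4 τ - 16)) ^ M with hH
  obtain ⟨j, m, hjm⟩ : ∃ j m : ℕ, k - 2 * M = j - m :=
    ⟨(k - 2 * M).toNat, (-(k - 2 * M)).toNat, by omega⟩
  obtain ⟨p, Θ, hΘ, hp⟩ := polar m H (fun q => q ^ j * (Φ q * (AA q * BB q) ^ M))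
    ((RatS.id.pow j).mul (hΦ.mul ((AA_rat.mul BB_rat).pow M))) (fun τ => by
      have h0 := qpow_ne 1 1 τ
      simp only [hH]
      rw [hinf, g16_inf, g_inf]
      have e : qpow 1 1 τ ^ k = qpow 1 1 τ ^ j * (qpow 1 1 τ ^ m)⁻¹ * qpow 1 1 τ ^ (2 * M) := by
        have : k = j + (-m) + ((2 * M : ℕ) : ℤ) := by push_cast; omega
        rw [this, zpow_add₀ h0, zpow_add₀ h0, zpow_natCast, zpow_natCast, _root_.zpow_neg, zpow_natCast]
      rw [e, mul_pow, mul_pow, mul_pow, mul_pow, inv_pow, pow_mul']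
      field_simp)
  have hDinf : ∀ τ, H τ - Polynomial.aeval (gOne4 τ) p = 0 := by
    have hex : ∃ c, ∀ τ, H τ - Polynomial.aeval (gOne4 τ) p = c := by
      refine const_of_bounded (Gamma1 4) (fun τ => H τ - Polynomial.aeval (gOne4 τ) p) ?_ ?_ ?_
      · rw [UpperHalfPlane.mdifferentiable_iff]
        have a1 := UpperHalfPlane.mdifferentiable_iff.1 hd
        have a2 := UpperHalfPlane.mdifferentiable_iff.1 gOne4_mdiff
        have : Differentiable ℂ (fun x : ℂ => Polynomial.aeval x p) := by
          have := (p.map (algebraMap ℚ ℂ)).differentiable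
          simpa [Polynomial.eval_map_algebraMap] using this
        exact (a1.mul ((a2.mul (a2.sub_const 16)).pow M)).sub (this.comp_differentiableOn a2)
      · intro γ hγ τ
        simp only [hH, hinv γ hγ, gOne4_gamma1 γ hγ]
      · intro γ
        refine Bd.bounded ?_
        have hDinv : ∀ γ ∈ Gamma1 4, ∀ τ : ℍ, (fun τ => H τ - Polynomial.aeval (gOne4 τ) p) (γ • τ) =
            (fun τ => H τ - Polynomial.aeval (gOne4 τ) p) τ := by
          intro γ hγ τ
          simp only [hH, hinv γ hγ, gOne4_gamma1 γ hγ]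
        rcases cosets (h := fun τ => H τ - Polynomial.aeval (gOne4 τ) p) hDinv γ with e | e | ⟨k, e⟩
        · skip
          simp only [e, hp]
          refine ⟨_, ((RatS.id.mul hΘ).comp_pow 4 (by simp)).diff, fun τ => by simp only [qpow_one_four]⟩
        · skip
          simp only [e]
          exact h1.sub (g_V_Bd.poly p)
        · skip
          simp only [e]
          exact (h2.sub (g_S_Bd.poly p)).shift k
    obtain ⟨c, hc⟩ := hex
    have ht : Tendsto (fun τ : ℍ => qpow 1 1 τ * Θ (qpow 1 1 τ)) atImInfty (𝓝 (0 * Θ 0)) := by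
      have hcont : ContinuousAt Θ 0 :=
        (hΘ.diff.differentiableAt (Metric.isOpen_ball.mem_nhds (by simp))).continuousAt
      exact (qpow_tendsto 1 (by simp)).mul (hcont.tendsto.comp (qpow_tendsto 1 (by simp)))
    rw [zero_mul] at ht
    have hc0 : c = 0 := by
      refine tendsto_nhds_unique (tendsto_const_nhds (x := c) (f := atImInfty)) (ht.congr fun τ => ?_)
      rw [← hp, hc]
    intro τ; rw [← hc0]; exact hc τ
  refine ⟨Polynomial.aeval (MvPolynomial.X 0) p * MvPolynomial.X 1 ^ M * MvPolynomial.X 2 ^ M, fun τ => ?_⟩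
  have g0 := gOne4_ne τ
  have g1 := gOne4_16_ne τ
  have := hDinf τ
  rw [sub_eq_zero] at this
  rw [map_mul, map_mul, map_pow, map_pow, ← Polynomial.aeval_algHom_apply]
  simp only [MvPolynomial.aeval_X]
  simp only [Matrix.cons_val]
  rw [← this, hH]
  simp only [mul_pow, inv_pow]
  field_simp

/-- `O_{1,4}(ℚ) = ℚ[g_{1,4}, g_{1,4}⁻¹, (g_{1,4} - 16)⁻¹]`. -/
theorem statement14 :
    IsWeaklyHolo1 4 gOne4 ∧
    IsWeaklyHolo1 4 (fun τ => (gOne4 τ)⁻¹) ∧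
    IsWeaklyHolo1 4 (fun τ => (gOne4 τ - 16)⁻¹) ∧
    (∀ h : ℍ → ℂ, IsWeaklyHolo1 4 h →
      ∃ P : MvPolynomial (Fin 3) ℚ, ∀ τ : ℍ,
        h τ = MvPolynomial.aeval ![gOne4 τ, (gOne4 τ)⁻¹, (gOne4 τ - 16)⁻¹] P) := by
  exact ⟨g_holo, gi_holo, g16i_holo, converse⟩
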